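/- arXiv:1510.00109 — 2 statements merged into one kernel-verified Lean document; each statement's English description precedes it below -/
import Mathlib

section
/- Consider the leader–follower system with parameters A > 0, k > 0, α > 1 and N follower agents, with the leader initially at (x_l(0), y_l(0)) = (1, 0). There exists r > 0 such that for every target trajectory γ = (γ₁, γ₂) with γ₁, γ₂ continuously differentiable on [0,1] and γ₁(0) = γ₂(0) = 0, and for all follower initial conditions satisfying ‖(xⁱ(0), vⁱ_x(0), yⁱ(0), vⁱ_y(0))‖ < r for each i = 1,…,N, there exist T > 0 and continuous control inputs u_x, u_y : [0,T] → ℝ such that the resulting solution of the system satisfies ‖γ(t/T) − (xⁱ(t), yⁱ(t))‖ < 1 for every follower i and every t ∈ [0,T], while ‖γ(t/T) − (x_l(t), y_l(t))‖ ≥ 1 for every t ∈ [0,T]; that is, the system is 1-confinement controllable about γ. -/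
open Real Set

/-!
The leader circles the moving target at distance `1` with a large angular velocity `ω`. In complex
notation, let `z` be the displacement of a follower from the target and `e` the position of the
leader relative to it, so that `‖e‖ = 1`. The repulsion expands as
`-e - (α - 1) * z - α * e ^ 2 * conj z + O(‖z‖ ^ 2)`. Over one turn of the leader the first and
third terms average to zero, so the follower feels the force `-A * (α - 1) * z`, which is restoring
because `α > 1`. Adding to the velocity a correction of order `1 / ω` cancels the two oscillating
terms up to an error of order `1 / ω`; what remains is a damped oscillator with small perturbations,
whose energy decreases strictly along solutions on some small level set. The followers are therefore
trapped in the corresponding sublevel set, provided that the target moves slowly enough, and a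
prescribed trajectory is made slow by taking `T` large.
-/

/-! ### Solutions trapped in a sublevel set -/

section

open Manifold Function
variable {E G : Type*} [NormedAddCommGroup E] [NormedSpace ℝ E] [FiniteDimensional ℝ E]
  [NormedAddCommGroup G] [NormedSpace ℝ G]

theorem exists_contDiff_hasCompactSupport_eqOn {n : ℕ} {K : Set E} {f : E → G}
    (hK : IsCompact K) (hf : ∀ p ∈ K, ContDiffAt ℝ n f p) :
    ∃ g : E → G, ContDiff ℝ n g ∧ HasCompactSupport g ∧ EqOn g f K := by
  have hopen : IsOpen {p | ContDiffAt ℝ n f p} :=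
    isOpen_iff_mem_nhds.2 fun _ (hp : ContDiffAt ℝ n f _) ↦ hp.eventually (by simp)
  obtain ⟨L, hL, hKL, hLf⟩ := exists_compact_between hK hopen hf
  obtain ⟨χ, hχ, -, hsupp, hone⟩ :=
    exists_contMDiff_support_eq_eq_one_iff (n := n) 𝓘(ℝ, E) isOpen_interior hK.isClosed hKL
  have htsupp : tsupport χ ⊆ L :=
    closure_minimal (hsupp.subset.trans interior_subset) hL.isClosed
  refine ⟨fun p ↦ χ p • f p, ?_, ?_, fun p hp ↦ by simp [(hone p).1 hp]⟩
  · refine contMDiff_iff_contDiff.1 (contMDiff_of_tsupport fun p hp ↦ ?_)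
    have hpχ : p ∈ tsupport χ := tsupport_smul_subset_left χ f hp
    exact (hχ.contDiff.contDiffAt.smul (hLf (htsupp hpχ))).contMDiffAt
  · exact (HasCompactSupport.of_support_subset_isCompact hL
      (subset_tsupport χ |>.trans htsupp)).smul_right

end

section

open scoped NNReal
variable {E : Type*} [NormedAddCommGroup E] [NormedSpace ℝ E]

theorem exists_hasDerivAt_of_lipschitzWith_of_norm_le [CompleteSpace E] {F : ℝ × E → E} {K L : ℝ≥0}
    (hF : LipschitzWith K F) (hL : ∀ p, ‖F p‖ ≤ L) (x₀ : E) (T : ℝ) :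
    ∃ x : ℝ → E, x 0 = x₀ ∧ ∀ t ∈ Icc 0 T, HasDerivAt x (F (t, x t)) t := by
  let S : ℝ≥0 := ‖T‖₊ + 1
  have hS : (S : ℝ) = |T| + 1 := rfl
  have h0 : (0 : ℝ) ∈ Icc (-S : ℝ) S := by simp
  have hPL : IsPicardLindelof (fun t x ↦ F (t, x)) ⟨0, h0⟩ x₀ (L * S) 0 L K :=
    { lipschitzOnWith := fun t _ ↦
        ((hF.comp (LipschitzWith.prodMk_left t)).weaken (by simp)).lipschitzOnWith
      continuousOn := fun x _ ↦ (hF.continuous.comp (by fun_prop)).continuousOn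
      norm_le := fun t _ x _ ↦ hL (t, x)
      mul_max_le := by simp }
  obtain ⟨x, hx0, hx⟩ := hPL.exists_eq_forall_mem_Icc_hasDerivWithinAt₀
  refine ⟨x, hx0, fun t ht ↦ ?_⟩
  have htS : t ∈ Ioo (-S : ℝ) S := by
    constructor <;> linarith [ht.1, ht.2, le_abs_self T, abs_nonneg T]
  exact (hx t (Ioo_subset_Icc_self htS)).hasDerivAt (Icc_mem_nhds htS.1 htS.2)

theorem exists_hasDerivAt_le_of_deriv_neg [FiniteDimensional ℝ E] {F : ℝ × E → E} {V : ℝ × E → ℝ}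
    {K : Set (ℝ × E)} {T c : ℝ} {x₀ : E} (hK : IsCompact K) (hF : ∀ p ∈ K, ContDiffAt ℝ 1 F p)
    (hV : Differentiable ℝ V) (hVK : ∀ t ∈ Icc 0 T, ∀ x, V (t, x) ≤ c → (t, x) ∈ K)
    (hdecr : ∀ x : ℝ → E, ∀ t ∈ Icc 0 T, HasDerivAt x (F (t, x t)) t → V (t, x t) = c →
      deriv (fun s ↦ V (s, x s)) t < 0)
    (h₀ : V (0, x₀) ≤ c) :
    ∃ x : ℝ → E, x 0 = x₀ ∧ ∀ t ∈ Icc 0 T, HasDerivAt x (F (t, x t)) t ∧ V (t, x t) ≤ c := by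
  have := FiniteDimensional.complete ℝ E
  -- Solve for a compactly supported modification `G` of `F`; the solution never leaves the region
  -- where the two agree.
  obtain ⟨G, hG, hGc, hGF⟩ := exists_contDiff_hasCompactSupport_eqOn (n := 1) hK hF
  obtain ⟨M, hM⟩ := hG.lipschitzWith_of_hasCompactSupport hGc one_ne_zero
  obtain ⟨C, hC⟩ := hGc.exists_bound_of_continuous hG.continuous
  obtain ⟨x, hx0, hx⟩ := exists_hasDerivAt_of_lipschitzWith_of_norm_le hM
    (fun p ↦ (hC p).trans (Real.le_coe_toNNReal C)) x₀ T
  have hVx : ∀ t ∈ Icc 0 T, DifferentiableAt ℝ (fun s ↦ V (s, x s)) t := fun t ht ↦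
    hV.differentiableAt.comp t (differentiableAt_id.prodMk (hx t ht).differentiableAt)
  have hle : ∀ ⦃t⦄, t ∈ Icc 0 T → V (t, x t) ≤ c :=
    image_le_of_deriv_right_lt_deriv_boundary
      (fun t ht ↦ (hVx t ht).continuousAt.continuousWithinAt)
      (fun t ht ↦ (hVx t (Ico_subset_Icc_self ht)).hasDerivAt.hasDerivWithinAt)
      (hx0.symm ▸ h₀) (fun t ↦ hasDerivAt_const t c)
      (fun t ht htc ↦ hdecr x t (Ico_subset_Icc_self ht)
        (hGF (hVK t (Ico_subset_Icc_self ht) _ htc.le) ▸ hx t (Ico_subset_Icc_self ht)) htc)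
  exact ⟨x, hx0, fun t ht ↦ ⟨hGF (hVK t ht _ (hle ht)) ▸ hx t ht, hle ht⟩⟩

/-! ### Slow reparametrization of a `C¹` curve -/

theorem exists_contDiff_eqOn_Icc [CompleteSpace E] {f : ℝ → E} {a b : ℝ} (hab : a < b)
    (hf : ContDiffOn ℝ 1 f (Icc a b)) : ∃ g : ℝ → E, ContDiff ℝ 1 g ∧ EqOn g f (Icc a b) := by
  have hf' : ContinuousOn (derivWithin f (Icc a b)) (Icc a b) :=
    hf.continuousOn_derivWithin (uniqueDiffOn_Icc hab) le_rfl
  let f' : ℝ → E := IccExtend hab.le ((Icc a b).domRestrict (derivWithin f (Icc a b)))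
  have hf'c : Continuous f' := (continuousOn_iff_continuous_domRestrict.1 hf').Icc_extend'
  have hf'e : EqOn f' (derivWithin f (Icc a b)) (Icc a b) := fun t ht ↦ IccExtend_of_mem _ _ ht
  let g : ℝ → E := fun t ↦ f a + ∫ s in a..t, f' s
  have hg : ∀ t, HasDerivAt g (f' t) t := fun t ↦
    (hf'c.integral_hasStrictDerivAt a t).hasDerivAt.const_add _
  refine ⟨g, contDiff_one_iff_deriv.2 ⟨fun t ↦ (hg t).differentiableAt, ?_⟩, fun t ht ↦ ?_⟩
  · rwa [show deriv g = f' from funext fun t ↦ (hg t).deriv]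
  · have hint : ∫ s in a..t, f' s = f t - f a :=
      intervalIntegral.integral_eq_sub_of_hasDerivAt_of_le ht.1
        (hf.continuousOn.mono (Icc_subset_Icc_right ht.2))
        (fun s hs ↦ by
          have hsI : s ∈ Ioo a b := ⟨hs.1, hs.2.trans_le ht.2⟩
          rw [hf'e (Ioo_subset_Icc_self hsI)]
          exact (hf.differentiableOn one_ne_zero s (Ioo_subset_Icc_self hsI)).hasDerivWithinAt
            |>.hasDerivAt (Icc_mem_nhds hsI.1 hsI.2))
        (hf'c.intervalIntegrable _ _)
    simp [g, hint]

theorem exists_slow_contDiff_reparametrization [CompleteSpace E] {γ : ℝ → E} {δ : ℝ}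
    (hγ : ContDiffOn ℝ 1 γ (Icc 0 1)) (hδ : 0 < δ) :
    ∃ T > 0, ∃ g : ℝ → E, ContDiff ℝ 1 g ∧ ∀ t ∈ Icc 0 T, g t = γ (t / T) ∧ ‖deriv g t‖ ≤ δ := by
  obtain ⟨f, hf, hfγ⟩ := exists_contDiff_eqOn_Icc zero_lt_one hγ
  obtain ⟨C, hC⟩ := (isCompact_Icc (a := (0 : ℝ)) (b := 1)).exists_bound_of_continuousOn
    (hf.continuous_deriv le_rfl).continuousOn
  have hC0 : 0 ≤ C := (norm_nonneg _).trans (hC 0 (by simp))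
  set T := (C + 1) / δ
  have hT : 0 < T := by positivity
  refine ⟨T, hT, fun t ↦ f (T⁻¹ * t), by fun_prop, fun t ht ↦ ?_⟩
  have htT : t / T ∈ Icc (0 : ℝ) 1 :=
    ⟨div_nonneg ht.1 hT.le, (div_le_one hT).2 ht.2⟩
  refine ⟨by simpa [inv_mul_eq_div] using hfγ htT, ?_⟩
  calc ‖deriv (fun t ↦ f (T⁻¹ * t)) t‖ = T⁻¹ * ‖deriv f (t / T)‖ := by
        rw [deriv_comp_mul_left, norm_smul, norm_of_nonneg (by positivity),
          inv_mul_eq_div T t]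
    _ ≤ T⁻¹ * (C + 1) := by gcongr; linarith [hC _ htT]
    _ = δ := by simp only [T]; field_simp

end

/-! ### Repulsion -/

theorem abs_inv_one_add_rpow_sub_le {α s : ℝ} (hα : 1 ≤ α) (hs : |s| ≤ 1 / (2 * α)) :
    |((1 + s) ^ α)⁻¹ - (1 - α * s)| ≤ 2 * α ^ 2 * s ^ 2 := by
  have hα0 : 0 < α := by linarith
  have hαs : |α * s| ≤ 1 / 2 := by
    rw [abs_mul, abs_of_pos hα0]
    calc α * |s| ≤ α * (1 / (2 * α)) := by gcongr
      _ = 1 / 2 := by field_simp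
  have hαs' := abs_le.1 hαs
  have hs' : -(1 / 2) ≤ s := by
    have hle : |s| ≤ 1 / 2 := hs.trans (one_div_le_one_div_of_le two_pos (by linarith))
    exact (abs_le.1 hle).1
  have hpos : 0 < 1 + s := by linarith
  have hupper : ((1 + s) ^ α)⁻¹ ≤ 1 - α * s + 2 * α ^ 2 * s ^ 2 := by
    calc ((1 + s) ^ α)⁻¹ ≤ (1 + α * s)⁻¹ :=
          inv_anti₀ (by linarith) (one_add_mul_self_le_rpow_one_add (by linarith) hα)
      _ ≤ 1 - α * s + 2 * α ^ 2 * s ^ 2 := by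
          rw [inv_le_iff_one_le_mul₀ (by linarith)]
          nlinarith [mul_nonneg (sq_nonneg (α * s)) (by linarith : 0 ≤ 1 / 2 + α * s)]
  have hlower : 1 - α * s ≤ ((1 + s) ^ α)⁻¹ := by
    have hinv : (1 + s)⁻¹ = 1 + -s / (1 + s) := by field_simp; ring
    have hle : -s ≤ -s / (1 + s) := by
      rw [le_div_iff₀ hpos]; nlinarith [sq_nonneg s]
    calc 1 - α * s ≤ 1 + α * (-s / (1 + s)) := by nlinarith
      _ ≤ (1 + -s / (1 + s)) ^ α :=
          one_add_mul_self_le_rpow_one_add (by linarith [inv_pos.2 hpos]) hα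
      _ = ((1 + s) ^ α)⁻¹ := by rw [← hinv, inv_rpow hpos.le]
  rw [abs_of_nonneg (by linarith)]
  linarith

section

open RealInnerProductSpace
variable {E : Type*} [NormedAddCommGroup E] [InnerProductSpace ℝ E]

/-- The repulsive force `u / ‖u‖ ^ (2 * α)` on a follower displaced by `u` from the leader. The
exponent is applied to `‖u‖ ^ 2`, as in the equations of motion. -/
noncomputable def repulsion (α : ℝ) (u : E) : E := ((‖u‖ ^ 2) ^ α)⁻¹ • u

theorem contDiffAt_repulsion {α : ℝ} {u : E} (hu : u ≠ 0) {n : WithTop ℕ∞} :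
    ContDiffAt ℝ n (repulsion α) u := by
  have hpos : 0 < ‖u‖ ^ 2 := by positivity
  exact (((contDiff_norm_sq ℝ).contDiffAt.rpow_const_of_ne hpos.ne').inv
    (rpow_pos_of_pos hpos α).ne').smul contDiffAt_id

/-- The phase-space vector field `(x, v) ↦ (v, A • repulsion α (x - ℓ t) - k • v)`, with `(t, x, v)`
as a single argument, of a follower repelled by a leader at `ℓ t` and subject to friction `k`. -/
noncomputable def followerField (A k α : ℝ) (ℓ : ℝ → E) (p : ℝ × E × E) : E × E :=
  (p.2.2, A • repulsion α (p.2.1 - ℓ p.1) - k • p.2.2)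

theorem contDiffAt_followerField {A k α : ℝ} {ℓ : ℝ → E} {p : ℝ × E × E} {n : WithTop ℕ∞}
    (hℓ : ContDiff ℝ n ℓ) (hp : p.2.1 ≠ ℓ p.1) :
    ContDiffAt ℝ n (followerField A k α ℓ) p := by
  have hrep : ContDiffAt ℝ n (fun q : ℝ × E × E ↦ repulsion α (q.2.1 - ℓ q.1)) p :=
    (contDiffAt_repulsion (sub_ne_zero.2 hp)).comp (f := fun q : ℝ × E × E ↦ q.2.1 - ℓ q.1) p
      (by fun_prop)
  unfold followerField
  fun_prop

theorem norm_repulsion_sub_le {α : ℝ} {z e : E} (hα : 1 ≤ α) (he : ‖e‖ = 1)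
    (hz : ‖z‖ ≤ 1 / (6 * α)) :
    ‖repulsion α (z - e) - (z - e - (2 * α * ⟪z, e⟫) • e)‖ ≤ 40 * α ^ 2 * ‖z‖ ^ 2 := by
  have : 0 < α := by linarith
  have hz1 : ‖z‖ ≤ 1 := hz.trans (by rw [div_le_one (by positivity)]; linarith)
  set P := ⟪z, e⟫
  have hPz : |P| ≤ ‖z‖ := by simpa [he] using abs_real_inner_le_norm z e
  set s := ‖z‖ ^ 2 - 2 * P with hs
  have hnorm : ‖z - e‖ ^ 2 = 1 + s := by rw [norm_sub_sq_real, he, hs]; ring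
  have hs_le : |s| ≤ 3 * ‖z‖ := by
    have := abs_le.1 hPz
    rw [abs_le]; constructor <;> nlinarith [norm_nonneg z]
  have hs_small : |s| ≤ 1 / (2 * α) :=
    calc |s| ≤ 3 * (1 / (6 * α)) := hs_le.trans (by gcongr)
      _ = 1 / (2 * α) := by field_simp; norm_num
  set ρ := ((1 + s) ^ α)⁻¹ - (1 - α * s) with hρ
  have hρ_le : |ρ| ≤ 18 * α ^ 2 * ‖z‖ ^ 2 :=
    calc |ρ| ≤ 2 * α ^ 2 * |s| ^ 2 := by
          rw [sq_abs]; exact abs_inv_one_add_rpow_sub_le hα hs_small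
      _ ≤ 2 * α ^ 2 * (3 * ‖z‖) ^ 2 := by gcongr
      _ = 18 * α ^ 2 * ‖z‖ ^ 2 := by ring
  have hsplit : repulsion α (z - e) - (z - e - (2 * α * P) • e)
      = (ρ - α * ‖z‖ ^ 2) • (z - e) + (2 * α * P) • z := by
    rw [repulsion, hnorm, hρ, hs]
    module
  have hze : ‖z - e‖ ≤ 2 := (norm_sub_le z e).trans (by linarith)
  calc _ ≤ (|ρ| + α * ‖z‖ ^ 2) * ‖z - e‖ + 2 * α * |P| * ‖z‖ := by
        rw [hsplit]
        refine (norm_add_le _ _).trans ?_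
        rw [norm_smul, norm_smul, norm_eq_abs, norm_eq_abs, abs_mul (2 * α),
          abs_of_pos (by positivity : 0 < 2 * α)]
        gcongr
        exact (abs_sub ρ _).trans_eq (by rw [abs_of_nonneg (by positivity : 0 ≤ α * ‖z‖ ^ 2)])
    _ ≤ (18 * α ^ 2 * ‖z‖ ^ 2 + α * ‖z‖ ^ 2) * 2 + 2 * α * ‖z‖ * ‖z‖ := by gcongr
    _ = (36 * α ^ 2 + 4 * α) * ‖z‖ ^ 2 := by ring
    _ ≤ 40 * α ^ 2 * ‖z‖ ^ 2 := by gcongr; nlinarith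

/-! ### Energy of a damped oscillator -/

/-- A Lyapunov function of the damped oscillator `z' = w`, `w' = -b • z - k • w`. Half of the
kinetic energy is measured with `w + k • z`, so that the dissipation controls `z` as well as `w`. -/
noncomputable def energy (k b : ℝ) (z w : E) : ℝ :=
  (‖w‖ ^ 2 + ‖w + k • z‖ ^ 2) / 2 + b * ‖z‖ ^ 2

theorem contDiff_energy {k b : ℝ} {n : WithTop ℕ∞} :
    ContDiff ℝ n (fun p : E × E ↦ energy k b p.1 p.2) :=
  (((contDiff_snd.norm_sq ℝ).add
    ((contDiff_snd.add (contDiff_fst.const_smul k)).norm_sq ℝ)).div_const 2).add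
      (contDiff_const.mul (contDiff_fst.norm_sq ℝ))

theorem energy_le {k b : ℝ} (hk : 0 ≤ k) (hb : 0 ≤ b) (z w : E) :
    energy k b z w ≤ ((1 + k + b) * (‖z‖ + ‖w‖)) ^ 2 := by
  have hwz : ‖w + k • z‖ ≤ (1 + k) * (‖z‖ + ‖w‖) := by
    calc ‖w + k • z‖ ≤ ‖w‖ + k * ‖z‖ := by
          simpa [norm_smul, abs_of_nonneg hk] using norm_add_le w (k • z)
      _ ≤ (1 + k) * (‖z‖ + ‖w‖) := by
          nlinarith [norm_nonneg z, mul_nonneg hk (norm_nonneg w)]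
  have hz : ‖z‖ ≤ ‖z‖ + ‖w‖ := by simp
  have hw : ‖w‖ ≤ ‖z‖ + ‖w‖ := by simp
  calc energy k b z w
      ≤ ((‖z‖ + ‖w‖) ^ 2 + ((1 + k) * (‖z‖ + ‖w‖)) ^ 2) / 2 + b * (‖z‖ + ‖w‖) ^ 2 := by
        unfold energy; gcongr
    _ = (1 / 2 + (1 + k) ^ 2 / 2 + b) * (‖z‖ + ‖w‖) ^ 2 := by ring
    _ ≤ (1 + k + b) ^ 2 * (‖z‖ + ‖w‖) ^ 2 := by gcongr; nlinarith [mul_nonneg hk hb]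
    _ = _ := by ring

theorem min_half_mul_add_sq_le {b : ℝ} (hb : 0 < b) (x y : ℝ) :
    (min (1 / 2) b * (x + y)) ^ 2 ≤ y ^ 2 / 2 + b * x ^ 2 := by
  set m := min (1 / 2) b
  have hm : 0 < m := by positivity
  have hm2 : m ^ 2 ≤ m / 2 := by nlinarith [min_le_left (1 / 2) b]
  calc (m * (x + y)) ^ 2 = m ^ 2 * (x + y) ^ 2 := by ring
    _ ≤ m / 2 * (2 * (x ^ 2 + y ^ 2)) := by gcongr; exact add_sq_le
    _ = m * y ^ 2 + m * x ^ 2 := by ring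
    _ ≤ 1 / 2 * y ^ 2 + b * x ^ 2 := by
        gcongr
        exacts [min_le_left _ _, min_le_right _ _]
    _ = _ := by ring

theorem norm_add_norm_le_of_energy_le {k b R : ℝ} {z w : E} (hb : 0 < b) (hR : 0 ≤ R)
    (h : energy k b z w ≤ (min (1 / 2) b * R) ^ 2) : ‖z‖ + ‖w‖ ≤ R := by
  have hle : (min (1 / 2) b * (‖z‖ + ‖w‖)) ^ 2 ≤ energy k b z w :=
    (min_half_mul_add_sq_le hb ‖z‖ ‖w‖).trans (by
      unfold energy; linarith [sq_nonneg ‖w + k • z‖])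
  exact le_of_mul_le_mul_left (le_of_sq_le_sq (hle.trans h) (by positivity)) (by positivity)

theorem le_norm_add_norm_of_le_energy {k b ρ : ℝ} {z w : E} (hk : 0 ≤ k) (hb : 0 ≤ b)
    (h : ((1 + k + b) * ρ) ^ 2 ≤ energy k b z w) : ρ ≤ ‖z‖ + ‖w‖ :=
  le_of_mul_le_mul_left
    (le_of_sq_le_sq (h.trans (energy_le hk hb z w)) (by positivity)) (by positivity)

theorem hasDerivAt_energy {k b : ℝ} {z w : ℝ → E} {p q : E} {t : ℝ}
    (hz : HasDerivAt z (w t + p) t) (hw : HasDerivAt w (-b • z t - k • w t + q) t) :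
    HasDerivAt (fun s ↦ energy k b (z s) (w s))
      (-k * (‖w t‖ ^ 2 + b * ‖z t‖ ^ 2) + (⟪w t, q⟫ + ⟪w t + k • z t, q + k • p⟫
        + 2 * b * ⟪z t, p⟫)) t := by
  refine (((hw.norm_sq.add (hw.add (hz.const_smul k)).norm_sq).div_const 2).add
    (hz.norm_sq.const_mul b)).congr_deriv ?_
  simp only [Pi.add_apply, Pi.smul_apply, inner_add_left, inner_add_right, inner_sub_right,
    inner_smul_left, inner_smul_right, real_inner_self_eq_norm_sq, real_inner_comm (z t) (w t),
    neg_smul, inner_neg_right, smul_add, conj_trivial]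
  ring

theorem energy_perturbation_le {k b ρ ε : ℝ} {z w p q : E} (hk : 0 ≤ k) (hb : 0 ≤ b)
    (hz : ‖z‖ ≤ ρ) (hw : ‖w‖ ≤ ρ) (hp : ‖p‖ ≤ ε) (hq : ‖q‖ ≤ ε) :
    ⟪w, q⟫ + ⟪w + k • z, q + k • p⟫ + 2 * b * ⟪z, p⟫ ≤ (1 + (1 + k) ^ 2 + 2 * b) * (ρ * ε) := by
  have hinner {u v : E} {r s : ℝ} (hu : ‖u‖ ≤ r) (hv : ‖v‖ ≤ s) : ⟪u, v⟫ ≤ r * s :=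
    (real_inner_le_norm u v).trans
      (mul_le_mul hu hv (norm_nonneg v) ((norm_nonneg u).trans hu))
  have hcomb {u v : E} {r : ℝ} (hu : ‖u‖ ≤ r) (hv : ‖v‖ ≤ r) : ‖u + k • v‖ ≤ (1 + k) * r :=
    calc ‖u + k • v‖ ≤ ‖u‖ + k * ‖v‖ := by
          simpa [norm_smul, abs_of_nonneg hk] using norm_add_le u (k • v)
      _ ≤ r + k * r := by gcongr
      _ = (1 + k) * r := by ring
  calc _ ≤ ρ * ε + (1 + k) * ρ * ((1 + k) * ε) + 2 * b * (ρ * ε) := by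
        gcongr
        exacts [hinner hw hq, hinner (hcomb hw hz) (hcomb hq hp), hinner hz hp]
    _ = _ := by ring

theorem exists_deriv_energy_neg {k b : ℝ} (hk : 0 < k) (hb : 0 < b) :
    ∃ c > 0, ∀ (z w : ℝ → E) (p q : E) (t : ℝ), HasDerivAt z (w t + p) t →
      HasDerivAt w (-b • z t - k • w t + q) t → 0 < ‖z t‖ + ‖w t‖ →
      ‖p‖ ≤ c * (‖z t‖ + ‖w t‖) → ‖q‖ ≤ c * (‖z t‖ + ‖w t‖) →
      deriv (fun s ↦ energy k b (z s) (w s)) t < 0 := by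
  set m := min (1 / 2) b
  set B := 1 + (1 + k) ^ 2 + 2 * b
  have hm : 0 < m := by positivity
  have hB : 0 < B := by positivity
  refine ⟨k * m ^ 2 / (2 * B), by positivity, fun z w p q t hz hw hρ hp hq ↦ ?_⟩
  set ρ := ‖z t‖ + ‖w t‖
  have hpert := energy_perturbation_le hk.le hb.le (by simp [ρ] : ‖z t‖ ≤ ρ)
    (by simp [ρ] : ‖w t‖ ≤ ρ) hp hq
  have hdiss : k * (m * ρ) ^ 2 ≤ k * (‖w t‖ ^ 2 + b * ‖z t‖ ^ 2) := by
    gcongr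
    exact (min_half_mul_add_sq_le hb ‖z t‖ ‖w t‖).trans (by linarith [sq_nonneg ‖w t‖])
  have hBc : B * (ρ * (k * m ^ 2 / (2 * B) * ρ)) = k * (m * ρ) ^ 2 / 2 := by field_simp
  have hpos : 0 < k * (m * ρ) ^ 2 := by positivity
  rw [(hasDerivAt_energy hz hw).deriv]
  linarith

end

/-! ### Averaging over a rapidly circling leader -/

section

open Complex ComplexConjugate

/-- The point of the unit circle that starts at `1` and rotates with angular velocity `ω`. -/
noncomputable def phasor (ω t : ℝ) : ℂ := cexp (ω * t * I)

@[simp] theorem norm_phasor (ω t : ℝ) : ‖phasor ω t‖ = 1 := by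
  simpa [phasor] using norm_exp_ofReal_mul_I (ω * t)

@[simp] theorem phasor_zero (ω : ℝ) : phasor ω 0 = 1 := by simp [phasor]

theorem hasDerivAt_phasor (ω t : ℝ) : HasDerivAt (phasor ω) (ω * I * phasor ω t) t := by
  have hlin : HasDerivAt (fun s : ℝ ↦ (ω : ℂ) * s * I) (ω * I) t := by
    simpa using ((hasDerivAt_id t).ofReal_comp.const_mul (ω : ℂ)).mul_const I
  exact hlin.cexp.congr_deriv (mul_comm _ _)

@[fun_prop] theorem contDiff_phasor (ω : ℝ) {n : WithTop ℕ∞} : ContDiff ℝ n (phasor ω) := by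
  have : ContDiff ℝ n (fun t : ℝ ↦ (t : ℂ)) := ofRealCLM.contDiff
  unfold phasor
  fun_prop

/-- As `e` runs over the unit circle, `e` and `e ^ 2 * conj z` average to zero, which leaves the
mean force `-(α - 1) * z`. -/
theorem norm_repulsion_sub_unit_add_le {α : ℝ} {z e : ℂ} (hα : 1 ≤ α) (he : ‖e‖ = 1)
    (hz : ‖z‖ ≤ 1 / (6 * α)) :
    ‖repulsion α (z - e) + e + (α - 1) * z + α * (e ^ 2 * conj z)‖ ≤ 40 * α ^ 2 * ‖z‖ ^ 2 := by
  have hee : e * conj e = 1 := by simp [mul_conj', he]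
  have hinner : ((2 * inner ℝ z e : ℝ) : ℂ) = conj z * e + z * conj e := by
    have h := add_conj (conj z * e)
    simpa [Complex.inner, mul_comm] using h.symm
  have hproj : (2 * α * inner ℝ z e) • e = (α : ℂ) * (z + e ^ 2 * conj z) := by
    rw [mul_right_comm, real_smul, ofReal_mul, hinner]
    linear_combination α * z * hee
  have hsplit : repulsion α (z - e) + e + (α - 1) * z + α * (e ^ 2 * conj z)
      = repulsion α (z - e) - (z - e - (2 * α * inner ℝ z e) • e) := by
    rw [hproj]; ring
  exact hsplit ▸ norm_repulsion_sub_le hα he hz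

/-- The term of order `1 / ω` which, added to the velocity of a follower at displacement `z`,
cancels the part of the linearized repulsion from `phasor ω t` that oscillates in `t`. -/
noncomputable def averagingCorrection (A α ω t : ℝ) (z : ℂ) : ℂ :=
  -(A / ω) * I * (phasor ω t + α / 2 * (phasor ω t ^ 2 * conj z))

theorem norm_averagingCorrection_le {A α ω t : ℝ} {z : ℂ} (hA : 0 ≤ A) (hα : 1 ≤ α) (hω : 0 < ω)
    (hz : ‖z‖ ≤ 1) : ‖averagingCorrection A α ω t z‖ ≤ 2 * A * α / ω := by
  have hα0 : 0 < α := by linarith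
  calc ‖averagingCorrection A α ω t z‖
      = A / ω * ‖phasor ω t + α / 2 * (phasor ω t ^ 2 * conj z)‖ := by
        simp [averagingCorrection, abs_of_nonneg hA, abs_of_pos hω]
    _ ≤ A / ω * (1 + α / 2 * ‖z‖) := by
        gcongr
        refine (norm_add_le _ _).trans ?_
        simp [abs_of_pos hα0]
    _ ≤ A / ω * (2 * α) := by gcongr; nlinarith
    _ = 2 * A * α / ω := by ring

theorem hasDerivAt_averagingCorrection {A α ω t : ℝ} {z : ℝ → ℂ} {z' : ℂ} (hω : ω ≠ 0)
    (hz : HasDerivAt z z' t) :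
    HasDerivAt (fun s ↦ averagingCorrection A α ω s (z s))
      (A * (phasor ω t + α * (phasor ω t ^ 2 * conj (z t)))
        - A * α / (2 * ω) * I * (phasor ω t ^ 2 * conj z')) t := by
  have hrot := hasDerivAt_phasor ω t
  have hconj : HasDerivAt (fun s ↦ conj (z s)) (conj z') t := hz.star
  refine ((hrot.add (((hrot.pow 2).mul hconj).const_mul ((α : ℂ) / 2))).const_mul
    (-(A / ω) * I : ℂ)).congr_deriv ?_
  have hω' : (ω : ℂ) ≠ 0 := ofReal_ne_zero.2 hω
  simp only [Pi.pow_apply]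
  field_simp
  linear_combination
    (-2 * A * ω * phasor ω t - 2 * A * α * ω * phasor ω t ^ 2 * conj (z t)) * I_sq

theorem exists_hasDerivAt_add_averagingCorrection {A k α ω t : ℝ} {z v : ℝ → ℂ} {d : ℂ}
    (hA : 0 < A) (hk : 0 ≤ k) (hα : 1 ≤ α) (hω : 2 * A * α ≤ ω)
    (hz : HasDerivAt z (v t - d) t)
    (hv : HasDerivAt v (A • repulsion α (z t - phasor ω t) - k • v t) t)
    (hd : ‖d‖ ≤ 1) (hz_le : ‖z t‖ ≤ 1 / (6 * α))
    (hw_le : ‖v t + averagingCorrection A α ω t (z t)‖ ≤ 1) :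
    ∃ p q : ℂ, HasDerivAt z (v t + averagingCorrection A α ω t (z t) + p) t ∧
      HasDerivAt (fun s ↦ v s + averagingCorrection A α ω s (z s))
        (-(A * (α - 1)) • z t - k • (v t + averagingCorrection A α ω t (z t)) + q) t ∧
      ‖p‖ ≤ 2 * A * α / ω + ‖d‖ ∧
      ‖q‖ ≤ 40 * A * α ^ 2 * ‖z t‖ ^ 2 + (k + 1) * (2 * A * α / ω) := by
  have hα0 : 0 < α := by linarith
  have hω0 : 0 < ω := lt_of_lt_of_le (by positivity) hω
  set h := averagingCorrection A α ω t (z t)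
  set e := phasor ω t
  have hh : ‖h‖ ≤ 2 * A * α / ω := norm_averagingCorrection_le hA.le hα hω0
    (hz_le.trans (by rw [div_le_one (by positivity)]; linarith))
  have hη : 2 * A * α / ω ≤ 1 := by rwa [div_le_one hω0]
  set R := repulsion α (z t - e) + e + (α - 1) * z t + α * (e ^ 2 * conj (z t)) with hR
  set J := A * α / (2 * ω) * I * (e ^ 2 * conj (v t - d)) with hJ
  have hJ_le : ‖J‖ ≤ 2 * A * α / ω := by
    have hvd : ‖v t - d‖ ≤ 4 := by
      calc ‖v t - d‖ = ‖v t + h - h - d‖ := by simp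
        _ ≤ ‖v t + h‖ + ‖h‖ + ‖d‖ := norm_sub_le_of_le (norm_sub_le _ _) le_rfl
        _ ≤ 4 := by linarith
    calc ‖J‖ = A * α / (2 * ω) * ‖v t - d‖ := by
          simp only [hJ, norm_mul, norm_div, norm_real, norm_I, norm_pow, norm_phasor, e,
            RCLike.norm_conj, Complex.norm_ofNat, norm_of_nonneg hA.le,
            norm_of_nonneg hα0.le, norm_of_nonneg hω0.le]
          ring
      _ ≤ A * α / (2 * ω) * 4 := by gcongr
      _ = 2 * A * α / ω := by ring
  refine ⟨-h - d, A * R + k * h - J, hz.congr_deriv (by ring),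
    (hv.add (hasDerivAt_averagingCorrection hω0.ne' hz)).congr_deriv ?_, ?_, ?_⟩
  · simp only [real_smul, hR, hJ, ofReal_neg, ofReal_mul, ofReal_sub, ofReal_one]
    ring
  · exact (norm_sub_le _ _).trans (by rw [norm_neg]; gcongr)
  · calc ‖A * R + k * h - J‖ ≤ A * ‖R‖ + k * ‖h‖ + ‖J‖ := by
          refine norm_sub_le_of_le (norm_add_le_of_le ?_ ?_) le_rfl
          · simp [abs_of_pos hA]
          · simp [abs_of_nonneg hk]
      _ ≤ A * (40 * α ^ 2 * ‖z t‖ ^ 2) + k * (2 * A * α / ω) + 2 * A * α / ω := by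
          gcongr
          exact norm_repulsion_sub_unit_add_le hα (norm_phasor ω t) hz_le
      _ = _ := by ring

/-- The energy of the averaged oscillator, of stiffness `A * (α - 1)`, evaluated at displacement `z`
and corrected velocity `v + averagingCorrection A α ω t z`. -/
noncomputable def correctedEnergy (A k α ω t : ℝ) (z v : ℂ) : ℝ :=
  energy k (A * (α - 1)) z (v + averagingCorrection A α ω t z)

theorem exists_deriv_correctedEnergy_neg {A k α : ℝ} (hA : 0 < A) (hk : 0 < k) (hα : 1 < α) :
    ∃ R ∈ Ioo (0 : ℝ) 1, ∃ κ ∈ Ioc (0 : ℝ) (1 / 2), ∀ (z v : ℝ → ℂ) (d : ℂ) (ω t ρ : ℝ),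
      HasDerivAt z (v t - d) t →
      HasDerivAt v (A • repulsion α (z t - phasor ω t) - k • v t) t →
      ‖z t‖ + ‖v t + averagingCorrection A α ω t (z t)‖ = ρ → 0 < ρ → ρ ≤ R → 0 < ω →
      2 * A * α / ω ≤ κ * ρ → ‖d‖ ≤ κ * ρ →
      deriv (fun s ↦ correctedEnergy A k α ω s (z s) (v s)) t < 0 := by
  obtain ⟨c, hc, hneg⟩ := exists_deriv_energy_neg (E := ℂ) hk (mul_pos hA (sub_pos.2 hα))
  have : 0 < α := by linarith
  set R := min (1 / (6 * α)) (c / (80 * A * α ^ 2))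
  set κ := min (1 / 2) (c / (2 * (k + 1)))
  have hR : 0 < R := by positivity
  have hκ : 0 < κ := by positivity
  have hRα : R ≤ 1 / (6 * α) := min_le_left _ _
  have hRc : 40 * A * α ^ 2 * R ≤ c / 2 := by
    calc 40 * A * α ^ 2 * R ≤ 40 * A * α ^ 2 * (c / (80 * A * α ^ 2)) := by
          gcongr; exact min_le_right _ _
      _ = c / 2 := by field_simp; norm_num
  have hκc : (k + 1) * κ ≤ c / 2 := by
    calc (k + 1) * κ ≤ (k + 1) * (c / (2 * (k + 1))) := by gcongr; exact min_le_right _ _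
      _ = c / 2 := by field_simp
  have hκ2 : κ ≤ 1 / 2 := min_le_left _ _
  have hR1 : R < 1 := hRα.trans_lt (by rw [div_lt_one (by positivity)]; linarith)
  refine ⟨R, ⟨hR, hR1⟩, κ, ⟨hκ, hκ2⟩, fun z v d ω t ρ hz hv hzw hρ hρR hω hη hd ↦ ?_⟩
  have hκρ : κ * ρ ≤ 1 := by nlinarith
  have hzρ : ‖z t‖ ≤ ρ := by simp [← hzw]
  have hwρ : ‖v t + averagingCorrection A α ω t (z t)‖ ≤ ρ := by simp [← hzw]
  obtain ⟨p, q, hz', hw', hp, hq⟩ := exists_hasDerivAt_add_averagingCorrection hA hk.le hα.le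
    ((div_le_one hω).1 (hη.trans hκρ)) hz hv (hd.trans hκρ) (hzρ.trans (hρR.trans hRα))
    (hwρ.trans (hρR.trans hR1.le))
  refine hneg z _ p q t hz' hw' (hzw ▸ hρ) (hzw ▸ ?_) (hzw ▸ ?_)
  · calc ‖p‖ ≤ κ * ρ + κ * ρ := hp.trans (add_le_add hη hd)
      _ = 2 * κ * ρ := by ring
      _ ≤ c * ρ := by gcongr; nlinarith
  · calc ‖q‖ ≤ 40 * A * α ^ 2 * (R * ρ) + (k + 1) * (κ * ρ) := by
          refine hq.trans ?_
          rw [sq ‖z t‖]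
          gcongr
          exact hzρ.trans hρR
      _ = (40 * A * α ^ 2 * R + (k + 1) * κ) * ρ := by ring
      _ ≤ c * ρ := by gcongr; linarith

theorem exists_correctedEnergy_barrier {A k α : ℝ} (hA : 0 < A) (hk : 0 < k) (hα : 1 < α) :
    ∃ c, ∃ ω, ∃ r > 0, ∃ δ > 0,
      (∀ t z v, correctedEnergy A k α ω t z v ≤ c → ‖z‖ < 1 ∧ ‖v‖ ≤ 2) ∧
      (∀ t z v, ‖z‖ ≤ r → ‖v‖ ≤ r → correctedEnergy A k α ω t z v ≤ c) ∧
      ∀ (z v : ℝ → ℂ) (d : ℂ) (t : ℝ), ‖d‖ ≤ δ → HasDerivAt z (v t - d) t →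
        HasDerivAt v (A • repulsion α (z t - phasor ω t) - k • v t) t →
        correctedEnergy A k α ω t (z t) (v t) = c →
        deriv (fun s ↦ correctedEnergy A k α ω s (z s) (v s)) t < 0 := by
  obtain ⟨R, ⟨hR, hR1⟩, κ, ⟨hκ, hκ2⟩, hneg⟩ := exists_deriv_correctedEnergy_neg hA hk hα
  have hb : 0 < A * (α - 1) := mul_pos hA (sub_pos.2 hα)
  have : 0 < α := by linarith
  set m := min (1 / 2) (A * (α - 1))
  set M := 1 + k + A * (α - 1)
  have hm : 0 < m := by positivity
  have hM : 1 ≤ M := by linarith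
  -- On the level `(m * R) ^ 2` the phase-space norm lies between `ρ` and `R`; `ω` is chosen to make
  -- the correction small relative to `ρ`.
  set ρ := m * R / M
  have hρ : 0 < ρ := by positivity
  have hρ1 : ρ ≤ 1 := by
    rw [div_le_one (by positivity)]
    nlinarith [hm, hM, min_le_left (1 / 2) (A * (α - 1))]
  have hMρ : M * ρ = m * R := mul_div_cancel₀ _ (by positivity)
  set ω := 2 * A * α / (κ * ρ)
  have hω : 0 < ω := by positivity
  have hη : 2 * A * α / ω = κ * ρ := by simp only [ω]; field_simp
  have hκρ : κ * ρ ≤ ρ / 2 := by nlinarith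
  have hcorr {t z} (hz : ‖z‖ ≤ 1) : ‖averagingCorrection A α ω t z‖ ≤ ρ / 2 :=
    (norm_averagingCorrection_le hA.le hα.le hω hz).trans (hη.trans_le hκρ)
  have hle {t z v} (h : correctedEnergy A k α ω t z v ≤ (m * R) ^ 2) :
      ‖z‖ + ‖v + averagingCorrection A α ω t z‖ ≤ R := norm_add_norm_le_of_energy_le hb hR.le h
  refine ⟨(m * R) ^ 2, ω, ρ / 4, by positivity, κ * ρ, by positivity,
    fun t z v h ↦ ?_, fun t z v hz hv ↦ ?_, fun z v d t hd hz hv hlevel ↦ ?_⟩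
  · have hzR : ‖z‖ ≤ R := (by simp : ‖z‖ ≤ _).trans (hle h)
    refine ⟨hzR.trans_lt hR1, ?_⟩
    have := norm_le_add_norm_add v (averagingCorrection A α ω t z)
    linarith [hle h, hcorr (t := t) (hzR.trans hR1.le), norm_nonneg z]
  · refine (energy_le hk.le hb.le z _).trans ?_
    rw [← hMρ]
    gcongr
    linarith [norm_add_le v (averagingCorrection A α ω t z), hcorr (t := t) (z := z) (by linarith)]
  · have hge := le_norm_add_norm_of_le_energy hk.le hb.le
      ((congrArg (· ^ 2) hMρ).trans_le hlevel.ge)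
    refine hneg z v d ω t _ hz hv rfl (hρ.trans_le hge) (hle hlevel.le) hω ?_ ?_
    · rw [hη]; gcongr
    · exact hd.trans (by gcongr)

/-! ### Confinement -/

theorem contDiff_averagingCorrection {A α ω : ℝ} {n : WithTop ℕ∞} :
    ContDiff ℝ n (fun p : ℝ × ℂ ↦ averagingCorrection A α ω p.1 p.2) := by
  have : ContDiff ℝ n (phasor ω) := contDiff_phasor ω
  have hconj : ContDiff ℝ n (fun p : ℝ × ℂ ↦ conj p.2) := conjCLE.contDiff.comp contDiff_snd
  unfold averagingCorrection
  fun_prop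

theorem contDiff_correctedEnergy {A k α ω : ℝ} {n : WithTop ℕ∞} :
    ContDiff ℝ n (fun p : ℝ × ℂ × ℂ ↦ correctedEnergy A k α ω p.1 p.2.1 p.2.2) := by
  have hcorr : ContDiff ℝ n (fun p : ℝ × ℂ × ℂ ↦ averagingCorrection A α ω p.1 p.2.1) :=
    contDiff_averagingCorrection.comp (f := fun p : ℝ × ℂ × ℂ ↦ (p.1, p.2.1)) (by fun_prop)
  exact contDiff_energy.comp (contDiff_snd.fst.prodMk (contDiff_snd.snd.add hcorr))

theorem isCompact_setOf_correctedEnergy_le {A k α c ω T R S : ℝ} {g : ℝ → ℂ} (hg : Continuous g)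
    (hsub : ∀ t z v, correctedEnergy A k α ω t z v ≤ c → ‖z‖ ≤ R ∧ ‖v‖ ≤ S) :
    IsCompact {p : ℝ × ℂ × ℂ |
      p.1 ∈ Icc 0 T ∧ correctedEnergy A k α ω p.1 (p.2.1 - g p.1) p.2.2 ≤ c} := by
  have htube : IsCompact ((fun p : ℝ × ℂ × ℂ ↦ (p.1, p.2.1 + g p.1, p.2.2)) ''
      (Icc 0 T ×ˢ Metric.closedBall 0 R ×ˢ Metric.closedBall 0 S)) :=
    (isCompact_Icc.prod ((isCompact_closedBall 0 R).prod (isCompact_closedBall 0 S))).image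
      (by fun_prop)
  have hcont : Continuous fun p : ℝ × ℂ × ℂ ↦
      correctedEnergy A k α ω p.1 (p.2.1 - g p.1) p.2.2 :=
    (contDiff_correctedEnergy (n := 0)).continuous.comp
      (f := fun p : ℝ × ℂ × ℂ ↦ (p.1, p.2.1 - g p.1, p.2.2)) (by fun_prop)
  refine htube.of_isClosed_subset
    ((isClosed_Icc.preimage continuous_fst).inter (isClosed_le hcont continuous_const)) ?_
  rintro ⟨t, x, v⟩ ⟨ht, hc⟩
  obtain ⟨hx, hv⟩ := hsub _ _ _ hc
  exact ⟨(t, x - g t, v), ⟨ht, by simpa using hx, by simpa using hv⟩, by simp⟩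

theorem exists_confined_follower {A k α c ω δ T : ℝ} {g : ℝ → ℂ} {x₀ v₀ : ℂ} (hg : ContDiff ℝ 1 g)
    (hgδ : ∀ t ∈ Icc 0 T, ‖deriv g t‖ ≤ δ)
    (hsub : ∀ t z v, correctedEnergy A k α ω t z v ≤ c → ‖z‖ < 1 ∧ ‖v‖ ≤ 2)
    (hneg : ∀ (z v : ℝ → ℂ) (d : ℂ) (t : ℝ), ‖d‖ ≤ δ → HasDerivAt z (v t - d) t →
      HasDerivAt v (A • repulsion α (z t - phasor ω t) - k • v t) t →
      correctedEnergy A k α ω t (z t) (v t) = c →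
      deriv (fun s ↦ correctedEnergy A k α ω s (z s) (v s)) t < 0)
    (h₀ : correctedEnergy A k α ω 0 (x₀ - g 0) v₀ ≤ c) :
    ∃ x v : ℝ → ℂ, x 0 = x₀ ∧ v 0 = v₀ ∧ ∀ t ∈ Icc 0 T, HasDerivAt x (v t) t ∧
      HasDerivAt v (A • repulsion α (x t - (g t + phasor ω t)) - k • v t) t ∧ ‖x t - g t‖ < 1 := by
  have hgd : Differentiable ℝ g := hg.differentiable one_ne_zero
  have hK := isCompact_setOf_correctedEnergy_le (T := T) hg.continuous
    fun t z v h ↦ (hsub t z v h).imp_left le_of_lt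
  have hV : Differentiable ℝ fun p : ℝ × ℂ × ℂ ↦
      correctedEnergy A k α ω p.1 (p.2.1 - g p.1) p.2.2 :=
    ((contDiff_correctedEnergy (n := 1)).differentiable one_ne_zero).comp
      (f := fun p : ℝ × ℂ × ℂ ↦ (p.1, p.2.1 - g p.1, p.2.2)) (by fun_prop)
  have hF : ∀ p ∈ {p : ℝ × ℂ × ℂ |
      p.1 ∈ Icc 0 T ∧ correctedEnergy A k α ω p.1 (p.2.1 - g p.1) p.2.2 ≤ c},
      ContDiffAt ℝ 1 (followerField A k α fun t ↦ g t + phasor ω t) p := by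
    rintro ⟨t, x, v⟩ ⟨-, hc⟩
    refine contDiffAt_followerField (hg.add (contDiff_phasor ω)) fun h ↦ ?_
    have hz : x - g t = phasor ω t := sub_eq_of_eq_add' h
    simpa [hz] using (hsub _ _ _ hc).1
  have hfst {y : ℝ → ℂ × ℂ} {y' t} (hy : HasDerivAt y y' t) :
      HasDerivAt (fun s ↦ (y s).1) y'.1 t := (hasFDerivAt_fst (p := y t)).comp_hasDerivAt t hy
  have hsnd {y : ℝ → ℂ × ℂ} {y' t} (hy : HasDerivAt y y' t) :
      HasDerivAt (fun s ↦ (y s).2) y'.2 t := (hasFDerivAt_snd (p := y t)).comp_hasDerivAt t hy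
  obtain ⟨y, hy0, hy⟩ := exists_hasDerivAt_le_of_deriv_neg hK hF hV (fun t ht p hp ↦ ⟨ht, hp⟩)
    (fun y t ht hy hc ↦ hneg (fun s ↦ (y s).1 - g s) (fun s ↦ (y s).2) (deriv g t) t (hgδ t ht)
      ((hfst hy).sub hgd.differentiableAt.hasDerivAt)
      ((hsnd hy).congr_deriv (by simp [followerField, sub_sub])) hc)
    (x₀ := (x₀, v₀)) h₀
  exact ⟨fun t ↦ (y t).1, fun t ↦ (y t).2, by simp [hy0], by simp [hy0], fun t ht ↦
    ⟨hfst (hy t ht).1, hsnd (hy t ht).1, (hsub _ _ _ (hy t ht).2).1⟩⟩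

theorem exists_confining_leader {A k α : ℝ} (hA : 0 < A) (hk : 0 < k) (hα : 1 < α) :
    ∃ r > 0, ∀ γ : ℝ → ℂ, ContDiffOn ℝ 1 γ (Icc 0 1) → ∃ T > 0, ∃ ℓ : ℝ → ℂ,
      ContDiff ℝ 1 ℓ ∧ ℓ 0 = γ 0 + 1 ∧ (∀ t ∈ Icc 0 T, ‖γ (t / T) - ℓ t‖ = 1) ∧
      ∀ x₀ v₀ : ℂ, ‖x₀ - γ 0‖ ≤ r → ‖v₀‖ ≤ r → ∃ x v : ℝ → ℂ, x 0 = x₀ ∧ v 0 = v₀ ∧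
        ∀ t ∈ Icc 0 T, HasDerivAt x (v t) t ∧
          HasDerivAt v (A • repulsion α (x t - ℓ t) - k • v t) t ∧ ‖γ (t / T) - x t‖ < 1 := by
  obtain ⟨c, ω, r, hr, δ, hδ, hsub, hinit, hneg⟩ := exists_correctedEnergy_barrier hA hk hα
  refine ⟨r, hr, fun γ hγ ↦ ?_⟩
  obtain ⟨T, hT, g, hg, hgT⟩ := exists_slow_contDiff_reparametrization hγ hδ
  have hg0 : g 0 = γ 0 := by simpa using (hgT 0 ⟨le_rfl, hT.le⟩).1
  refine ⟨T, hT, fun t ↦ g t + phasor ω t, hg.add (contDiff_phasor ω), by simp [hg0],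
    fun t ht ↦ by simp [(hgT t ht).1], fun x₀ v₀ hx₀ hv₀ ↦ ?_⟩
  obtain ⟨x, v, hx0, hv0, hxv⟩ := exists_confined_follower hg (fun t ht ↦ (hgT t ht).2) hsub hneg
    (hinit 0 _ v₀ (hg0 ▸ hx₀) hv₀)
  refine ⟨x, v, hx0, hv0, fun t ht ↦ ?_⟩
  obtain ⟨hx, hv, hlt⟩ := hxv t ht
  exact ⟨hx, hv, by rwa [← (hgT t ht).1, norm_sub_rev]⟩

theorem hasDerivAt_re {f : ℝ → ℂ} {f' : ℂ} {t : ℝ} (hf : HasDerivAt f f' t) :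
    HasDerivAt (fun s ↦ (f s).re) f'.re t :=
  reCLM.hasFDerivAt.comp_hasDerivAt t hf

theorem hasDerivAt_im {f : ℝ → ℂ} {f' : ℂ} {t : ℝ} (hf : HasDerivAt f f' t) :
    HasDerivAt (fun s ↦ (f s).im) f'.im t :=
  imCLM.hasFDerivAt.comp_hasDerivAt t hf

theorem hasDerivAt_re_im_of_follower {A k α t : ℝ} {x v ℓ : ℝ → ℂ} (hx : HasDerivAt x (v t) t)
    (hv : HasDerivAt v (A • repulsion α (x t - ℓ t) - k • v t) t) :
    HasDerivAt (fun s ↦ (x s).re) (v t).re t ∧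
    HasDerivAt (fun s ↦ (v s).re) (A * ((x t).re - (ℓ t).re) /
      (((x t).re - (ℓ t).re) ^ 2 + ((x t).im - (ℓ t).im) ^ 2) ^ α - k * (v t).re) t ∧
    HasDerivAt (fun s ↦ (x s).im) (v t).im t ∧
    HasDerivAt (fun s ↦ (v s).im) (A * ((x t).im - (ℓ t).im) /
      (((x t).re - (ℓ t).re) ^ 2 + ((x t).im - (ℓ t).im) ^ 2) ^ α - k * (v t).im) t := by
  have hnorm : ‖x t - ℓ t‖ ^ 2 = ((x t).re - (ℓ t).re) ^ 2 + ((x t).im - (ℓ t).im) ^ 2 := by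
    rw [Complex.sq_norm, normSq_apply, sub_re, sub_im]; ring
  refine ⟨hasDerivAt_re hx, (hasDerivAt_re hv).congr_deriv ?_, hasDerivAt_im hx,
    (hasDerivAt_im hv).congr_deriv ?_⟩ <;>
  · simp only [repulsion, hnorm, sub_re, sub_im, Complex.smul_re, Complex.smul_im, smul_eq_mul]
    ring

theorem norm_le_of_sqrt_lt {x y vx vy r : ℝ} (h : √(x ^ 2 + vx ^ 2 + y ^ 2 + vy ^ 2) < r) :
    ‖(⟨x, y⟩ : ℂ)‖ ≤ r ∧ ‖(⟨vx, vy⟩ : ℂ)‖ ≤ r := by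
  simp only [Complex.norm_eq_sqrt_sq_add_sq]
  constructor <;> refine (sqrt_le_sqrt ?_).trans h.le <;> nlinarith

end

theorem leader_follower_one_confinement_controllable_general
    (A k α : ℝ) (hA : 0 < A) (hk : 0 < k) (hα : 1 < α) :
    ∃ r > (0 : ℝ), ∀ (ι : Type*) (γ₁ γ₂ : ℝ → ℝ),
      ContDiffOn ℝ 1 γ₁ (Icc 0 1) → ContDiffOn ℝ 1 γ₂ (Icc 0 1) → γ₁ 0 = 0 → γ₂ 0 = 0 →
      ∀ x0 y0 vx0 vy0 : ι → ℝ,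
        (∀ i, √((x0 i) ^ 2 + (vx0 i) ^ 2 + (y0 i) ^ 2 + (vy0 i) ^ 2) < r) →
        ∃ T > (0 : ℝ), ∃ ux uy : ℝ → ℝ,
          ContinuousOn ux (Icc 0 T) ∧ ContinuousOn uy (Icc 0 T) ∧
          ∃ xl yl : ℝ → ℝ, ∃ x y vx vy : ι → ℝ → ℝ,
            xl 0 = 1 ∧ yl 0 = 0 ∧
            (∀ i, x i 0 = x0 i ∧ y i 0 = y0 i ∧ vx i 0 = vx0 i ∧ vy i 0 = vy0 i) ∧
            (∀ t ∈ Icc (0 : ℝ) T,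
              HasDerivAt xl (ux t) t ∧ HasDerivAt yl (uy t) t ∧
              ∀ i,
                HasDerivAt (x i) (vx i t) t ∧
                HasDerivAt (vx i)
                  (A * (x i t - xl t) /
                    ((x i t - xl t) ^ 2 + (y i t - yl t) ^ 2) ^ α - k * vx i t) t ∧
                HasDerivAt (y i) (vy i t) t ∧
                HasDerivAt (vy i)
                  (A * (y i t - yl t) /
                    ((x i t - xl t) ^ 2 + (y i t - yl t) ^ 2) ^ α - k * vy i t) t) ∧
            (∀ t ∈ Icc (0 : ℝ) T,
              (∀ i, √((γ₁ (t / T) - x i t) ^ 2 + (γ₂ (t / T) - y i t) ^ 2) < 1) ∧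
              1 ≤ √((γ₁ (t / T) - xl t) ^ 2 + (γ₂ (t / T) - yl t) ^ 2)) := by
  obtain ⟨r, hr, hconf⟩ := exists_confining_leader hA hk hα
  refine ⟨r, hr, fun ι γ₁ γ₂ hγ₁ hγ₂ h₁ h₂ x0 y0 vx0 vy0 h0 ↦ ?_⟩
  have hγ : ContDiffOn ℝ 1 (fun t ↦ (⟨γ₁ t, γ₂ t⟩ : ℂ)) (Icc 0 1) :=
    Complex.equivRealProdCLM.symm.contDiff.comp_contDiffOn (hγ₁.prodMk hγ₂)
  have hγ0 : (⟨γ₁ 0, γ₂ 0⟩ : ℂ) = 0 := Complex.ext h₁ h₂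
  obtain ⟨T, hT, ℓ, hℓ, hℓ0, hdist, hfollow⟩ := hconf _ hγ
  choose x v hx0 hv0 hxv using fun i ↦ hfollow ⟨x0 i, y0 i⟩ ⟨vx0 i, vy0 i⟩
    (by simpa [hγ0] using (norm_le_of_sqrt_lt (h0 i)).1) (norm_le_of_sqrt_lt (h0 i)).2
  have hℓ' t : HasDerivAt ℓ (deriv ℓ t) t := (hℓ.differentiable one_ne_zero t).hasDerivAt
  have hℓ'c := hℓ.continuous_deriv le_rfl
  simp only [Complex.norm_eq_sqrt_sq_add_sq, Complex.sub_re, Complex.sub_im] at hdist hxv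
  exact ⟨T, hT, fun t ↦ (deriv ℓ t).re, fun t ↦ (deriv ℓ t).im,
    (Complex.continuous_re.comp hℓ'c).continuousOn, (Complex.continuous_im.comp hℓ'c).continuousOn,
    fun t ↦ (ℓ t).re, fun t ↦ (ℓ t).im, fun i t ↦ (x i t).re, fun i t ↦ (x i t).im,
    fun i t ↦ (v i t).re, fun i t ↦ (v i t).im, by simp [hℓ0, h₁], by simp [hℓ0, h₂],
    fun i ↦ by simp [hx0 i, hv0 i],
    fun t ht ↦ ⟨hasDerivAt_re (hℓ' t), hasDerivAt_im (hℓ' t), fun i ↦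
      hasDerivAt_re_im_of_follower (hxv i t ht).1 (hxv i t ht).2.1⟩,
    fun t ht ↦ ⟨fun i ↦ (hxv i t ht).2.2, (hdist t ht).ge⟩⟩

/-- The leader–follower system with parameters `A > 0`, `k > 0`, `α > 1`,
`N` followers, leader initially at `(1, 0)`, is 1-confinement controllable about every
`C¹` trajectory `γ = (γ₁, γ₂)` on `[0,1]` with `γ(0) = 0`, provided the followers'
initial states lie in a ball of radius `r` (for some uniform `r > 0`). -/
theorem leader_follower_one_confinement_controllable
    (A k α : ℝ) (hA : 0 < A) (hk : 0 < k) (hα : 1 < α) (N : ℕ) :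
    ∃ r > (0 : ℝ),
      ∀ γ₁ γ₂ : ℝ → ℝ,
        ContDiffOn ℝ 1 γ₁ (Icc 0 1) → ContDiffOn ℝ 1 γ₂ (Icc 0 1) →
        γ₁ 0 = 0 → γ₂ 0 = 0 →
        ∀ x0 y0 vx0 vy0 : Fin N → ℝ,
          (∀ i, Real.sqrt ((x0 i) ^ 2 + (vx0 i) ^ 2 + (y0 i) ^ 2 + (vy0 i) ^ 2) < r) →
          ∃ T > (0 : ℝ), ∃ ux uy : ℝ → ℝ,
            ContinuousOn ux (Icc 0 T) ∧ ContinuousOn uy (Icc 0 T) ∧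
            ∃ xl yl : ℝ → ℝ, ∃ x y vx vy : Fin N → ℝ → ℝ,
              xl 0 = 1 ∧ yl 0 = 0 ∧
              (∀ i, x i 0 = x0 i ∧ y i 0 = y0 i ∧ vx i 0 = vx0 i ∧ vy i 0 = vy0 i) ∧
              (∀ t ∈ Icc (0 : ℝ) T,
                HasDerivAt xl (ux t) t ∧ HasDerivAt yl (uy t) t ∧
                ∀ i,
                  HasDerivAt (x i) (vx i t) t ∧
                  HasDerivAt (vx i)
                    (A * (x i t - xl t) /
                      ((x i t - xl t) ^ 2 + (y i t - yl t) ^ 2) ^ α - k * vx i t) t ∧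
                  HasDerivAt (y i) (vy i t) t ∧
                  HasDerivAt (vy i)
                    (A * (y i t - yl t) /
                      ((x i t - xl t) ^ 2 + (y i t - yl t) ^ 2) ^ α - k * vy i t) t) ∧
              (∀ t ∈ Icc (0 : ℝ) T,
                (∀ i, Real.sqrt ((γ₁ (t / T) - x i t) ^ 2 + (γ₂ (t / T) - y i t) ^ 2) < 1) ∧
                1 ≤ Real.sqrt ((γ₁ (t / T) - xl t) ^ 2 + (γ₂ (t / T) - yl t) ^ 2)) := by
  obtain ⟨r, hr, h⟩ := leader_follower_one_confinement_controllable_general A k α hA hk hα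
  exact ⟨r, hr, h (Fin N)⟩
end

section
/- Let A > 0, k > 0, α > 1. Let γ₁, γ₂ be continuously differentiable on [0,1] with γ₁(0) = γ₂(0) = 0, and for δ > 0 define γᵢ^δ(t) = γᵢ(δt) for t ∈ [0, 1/δ]. There exist positive constants r₁, ω₁, δ₁, depending on A, k, and α, such that for all ω > ω₁ and all δ ∈ (0, δ₁): every solution X = (x, v_x, y, v_y) of Ẋ = F(t, X, ω, γ^δ) with ‖X(0)‖ ≤ r₁ is defined on the whole interval [0, 1/δ] and satisfies ‖(x(t), y(t)) − (γ₁^δ(t), γ₂^δ(t))‖ < 1 for all t ∈ [0, 1/δ]. -/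
open Real Set

/-!
In complex notation the displacement `q` from the target feels the force `A (q - e) / |q - e|^(2α)`
of a source at `e = exp(iωt)`. Near `q = 0` this is `-A e + A (1 - α) q - A α e² q̄ + o(q)`. The
terms carrying `e` or `e²` oscillate rapidly, and a correction of the velocity of size `O(1/ω)`
cancels them up to an error `O(1/ω)`. What remains is the damped oscillator
`q'' = -A (α - 1) q - k q'`, whose equilibrium is totally stable: by means of a quadratic Lyapunov
function, small permanent perturbations only cause small displacements. A slowly moving target is
such a perturbation. Indeed a continuous `γ` is uniformly close to a `C¹` curve, whose velocity
along `δt` is `O(δ)`. Global existence follows as well: once the force is cut off away from the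
target the vector field is globally Lipschitz and bounded, and confinement keeps its solutions in
the region where nothing has been cut off.
-/

open scoped RealInnerProductSpace ComplexConjugate NNReal

section Truncation

open Metric

variable {E F : Type*} [NormedAddCommGroup E] [NormedSpace ℝ E] [FiniteDimensional ℝ E]
  [NormedAddCommGroup F] [NormedSpace ℝ F]

lemma exists_lipschitzWith_bounded_eqOn_closedBall {f : E → F} {c : E} {r R : ℝ} (hr : 0 < r)
    (hrR : r < R) (hf : ∀ x ∈ closedBall c R, ContDiffAt ℝ 1 f x) :
    ∃ (g : E → F) (K : ℝ≥0) (M : ℝ), LipschitzWith K g ∧ (∀ x, ‖g x‖ ≤ M) ∧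
      EqOn g f (closedBall c r) := by
  let φ : ContDiffBump c := ⟨r, R, hr, hrR⟩
  have hsupp : HasCompactSupport fun x => φ x • f x := φ.hasCompactSupport.smul_right
  have hdiff : ContDiff ℝ 1 fun x => φ x • f x := by
    refine contDiff_iff_contDiffAt.2 fun x => ?_
    by_cases hx : x ∈ tsupport fun x => φ x • f x
    · have hxR : x ∈ closedBall c R := φ.tsupport_eq ▸ tsupport_smul_subset_left φ f hx
      exact φ.contDiffAt.smul (hf x hxR)
    · exact contDiffAt_const.congr_of_eventuallyEq (notMem_tsupport_iff_eventuallyEq.1 hx)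
  obtain ⟨K, hK⟩ := hdiff.lipschitzWith_of_hasCompactSupport hsupp one_ne_zero
  obtain ⟨M, hM⟩ := hsupp.exists_bound_of_continuous hdiff.continuous
  refine ⟨_, K, M, hK, hM, fun x hx => ?_⟩
  simp only [φ.one_of_mem_closedBall hx, one_smul]

end Truncation

section Global

variable {E : Type*} [NormedAddCommGroup E] [NormedSpace ℝ E] [CompleteSpace E]

theorem exists_hasDerivAt_Icc_of_lipschitzWith_of_bounded {f : ℝ → E → E} {K : ℝ≥0} {M : ℝ}
    (hlip : ∀ t, LipschitzWith K (f t)) (hcont : ∀ x, Continuous (f · x))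
    (hM : ∀ t x, ‖f t x‖ ≤ M) (T : ℝ) (x₀ : E) :
    ∃ x : ℝ → E, x 0 = x₀ ∧ ∀ t ∈ Icc 0 T, HasDerivAt x (f t (x t)) t := by
  set L : ℝ≥0 := T.toNNReal + 1
  have hL : (1 : ℝ) ≤ L := by simp [L]
  have hT : T < L := (le_coe_toNNReal T).trans_lt (lt_add_one _)
  have hPL : IsPicardLindelof f (tmin := -L) (tmax := L) ⟨0, by simp⟩ x₀
      (M.toNNReal * L) 0 M.toNNReal K :=
    { lipschitzOnWith t _ := (hlip t).lipschitzOnWith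
      continuousOn x _ := (hcont x).continuousOn
      norm_le t _ x _ := (hM t x).trans (le_coe_toNNReal M)
      mul_max_le := by simp }
  obtain ⟨x, hx₀, hx⟩ := hPL.exists_eq_forall_mem_Icc_hasDerivWithinAt₀
  refine ⟨x, hx₀, fun t ht => ?_⟩
  have hmem : t ∈ Ioo (-L : ℝ) L := ⟨by linarith [ht.1], ht.2.trans_lt hT⟩
  exact (hx t (Ioo_subset_Icc_self hmem)).hasDerivAt (Icc_mem_nhds hmem.1 hmem.2)

end Global

section Approximation

lemma exists_continuous_eqOn_Icc {X : Type*} [TopologicalSpace X] {f : ℝ → X} {a b : ℝ}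
    (hab : a ≤ b) (hf : ContinuousOn f (Icc a b)) : ∃ g, Continuous g ∧ EqOn g f (Icc a b) :=
  ⟨IccExtend hab ((Icc a b).domRestrict f), hf.domRestrict.Icc_extend',
    fun _ ht => IccExtend_of_mem hab _ ht⟩

lemma exists_norm_sub_le_of_continuousOn_Icc {E : Type*} [NormedAddCommGroup E] [NormedSpace ℝ E]
    {f : ℝ → E} {a b ε : ℝ} (hab : a ≤ b) (hf : ContinuousOn f (Icc a b)) (hε : 0 < ε) :
    ∃ (p p' : ℝ → E) (M : ℝ), 0 < M ∧ (∀ s, HasDerivAt p (p' s) s) ∧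
      (∀ s ∈ Icc a b, ‖p' s‖ ≤ M) ∧ ∀ s ∈ Icc a b, ‖p s - f s‖ ≤ ε := by
  obtain ⟨g, hg, hgf⟩ := exists_continuous_eqOn_Icc hab hf
  obtain ⟨p, hp, hpg, -⟩ := hg.exists_contDiff_approx 1 continuous_const fun _ => hε
  obtain ⟨M, hM⟩ := isCompact_Icc.exists_bound_of_continuousOn (s := Icc a b)
    (hp.continuous_deriv le_rfl).continuousOn
  exact ⟨p, deriv p, max M 1, by positivity,
    fun s => (hp.differentiable one_ne_zero s).hasDerivAt,
    fun s hs => (hM s hs).trans (le_max_left _ _),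
    fun s hs => hgf hs ▸ (dist_eq_norm (p s) (g s) ▸ hpg s).le⟩

end Approximation

section DampedOscillator

variable {E : Type*} [NormedAddCommGroup E] [InnerProductSpace ℝ E] {b k : ℝ}

/-- A Lyapunov function of the damped oscillator `q' = w`, `w' = -b q - k w`. -/
noncomputable def oscillatorEnergy (b k : ℝ) (q w : E) : ℝ :=
  2 * b * ‖q‖ ^ 2 + ‖w‖ ^ 2 + ‖w + k • q‖ ^ 2

lemma hasDerivAt_oscillatorEnergy {q w : ℝ → E} {f g : E} {t : ℝ}
    (hq : HasDerivAt q (w t + f) t) (hw : HasDerivAt w (-(b • q t) - k • w t + g) t) :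
    HasDerivAt (fun s => oscillatorEnergy b k (q s) (w s))
      (-(2 * k * (b * ‖q t‖ ^ 2 + ‖w t‖ ^ 2)) +
        (4 * b * ⟪q t, f⟫ + 2 * ⟪w t, g⟫ + 2 * ⟪w t + k • q t, g + k • f⟫)) t := by
  have h := ((hq.norm_sq.const_mul (2 * b)).add hw.norm_sq).add (hw.add (hq.const_smul k)).norm_sq
  refine h.congr_deriv ?_
  simp only [Pi.add_apply, Pi.smul_apply, inner_add_left, inner_add_right, inner_sub_right,
    inner_neg_right, real_inner_smul_left, real_inner_smul_right, real_inner_self_eq_norm_sq]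
  rw [real_inner_comm (q t) (w t)]
  ring

lemma min_mul_sq_norm_le_oscillatorEnergy (q w : E) :
    min 1 (2 * b) * (‖q‖ ^ 2 + ‖w‖ ^ 2) ≤ oscillatorEnergy b k q w := by
  calc min 1 (2 * b) * (‖q‖ ^ 2 + ‖w‖ ^ 2)
      = min 1 (2 * b) * ‖q‖ ^ 2 + min 1 (2 * b) * ‖w‖ ^ 2 := by ring
    _ ≤ 2 * b * ‖q‖ ^ 2 + 1 * ‖w‖ ^ 2 := by
        gcongr
        exacts [min_le_right _ _, min_le_left _ _]
    _ ≤ oscillatorEnergy b k q w := by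
        rw [oscillatorEnergy]
        linarith [sq_nonneg ‖w + k • q‖]

lemma norm_add_smul_le {q w : E} {r : ℝ} (hk : 0 ≤ k) (hq : ‖q‖ ≤ r) (hw : ‖w‖ ≤ r) :
    ‖w + k • q‖ ≤ (1 + k) * r := by
  calc ‖w + k • q‖ ≤ ‖w‖ + k * ‖q‖ := by
        simpa [norm_smul, abs_of_nonneg hk] using norm_add_le w (k • q)
    _ ≤ r + k * r := by gcongr
    _ = (1 + k) * r := by ring

lemma oscillatorEnergy_le_mul_sq (hb : 0 ≤ b) (hk : 0 ≤ k) {q w : E} {r : ℝ}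
    (hq : ‖q‖ ≤ r) (hw : ‖w‖ ≤ r) :
    oscillatorEnergy b k q w ≤ (2 * b + 1 + (1 + k) ^ 2) * r ^ 2 := by
  calc oscillatorEnergy b k q w
      ≤ 2 * b * r ^ 2 + r ^ 2 + ((1 + k) * r) ^ 2 := by
        rw [oscillatorEnergy]
        gcongr
        exact norm_add_smul_le hk hq hw
    _ = (2 * b + 1 + (1 + k) ^ 2) * r ^ 2 := by ring

lemma oscillatorEnergy_le_mul_dissipation (hb : 0 < b) (q w : E) :
    oscillatorEnergy b k q w ≤ (3 + 2 * k ^ 2 / b) * (b * ‖q‖ ^ 2 + ‖w‖ ^ 2) := by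
  have hsum : ‖w + k • q‖ ^ 2 ≤ 2 * (‖w‖ ^ 2 + k ^ 2 * ‖q‖ ^ 2) := by
    calc ‖w + k • q‖ ^ 2 ≤ (‖w‖ + ‖k • q‖) ^ 2 := by gcongr; exact norm_add_le _ _
      _ ≤ 2 * (‖w‖ ^ 2 + ‖k • q‖ ^ 2) := add_sq_le
      _ = 2 * (‖w‖ ^ 2 + k ^ 2 * ‖q‖ ^ 2) := by rw [norm_smul, mul_pow, norm_eq_abs, sq_abs]
  calc oscillatorEnergy b k q w
      ≤ 2 * b * ‖q‖ ^ 2 + ‖w‖ ^ 2 + 2 * (‖w‖ ^ 2 + k ^ 2 * ‖q‖ ^ 2) := by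
        rw [oscillatorEnergy]; gcongr
    _ ≤ 2 * b * ‖q‖ ^ 2 + ‖w‖ ^ 2 + 2 * (‖w‖ ^ 2 + k ^ 2 * ‖q‖ ^ 2)
          + (b * ‖q‖ ^ 2 + 2 * k ^ 2 / b * ‖w‖ ^ 2) := le_add_of_nonneg_right (by positivity)
    _ = (3 + 2 * k ^ 2 / b) * (b * ‖q‖ ^ 2 + ‖w‖ ^ 2) := by field_simp; ring

lemma oscillator_perturbation_power_le (hb : 0 ≤ b) (hk : 0 ≤ k) {q w f g : E} {r s : ℝ}
    (hq : ‖q‖ ≤ r) (hw : ‖w‖ ≤ r) (hf : ‖f‖ ≤ s) (hg : ‖g‖ ≤ s) :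
    4 * b * ⟪q, f⟫ + 2 * ⟪w, g⟫ + 2 * ⟪w + k • q, g + k • f⟫
      ≤ 2 * (2 * b + 1 + (1 + k) ^ 2) * (r * s) := by
  have inner_le {u v : E} {c d : ℝ} (hu : ‖u‖ ≤ c) (hv : ‖v‖ ≤ d) : ⟪u, v⟫ ≤ c * d :=
    (real_inner_le_norm u v).trans
      (mul_le_mul hu hv (norm_nonneg v) ((norm_nonneg u).trans hu))
  calc 4 * b * ⟪q, f⟫ + 2 * ⟪w, g⟫ + 2 * ⟪w + k • q, g + k • f⟫
      ≤ 4 * b * (r * s) + 2 * (r * s) + 2 * (((1 + k) * r) * ((1 + k) * s)) := by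
        gcongr
        exacts [inner_le hq hf, inner_le hw hg,
          inner_le (norm_add_smul_le hk hq hw) (norm_add_smul_le hk hf hg)]
    _ = 2 * (2 * b + 1 + (1 + k) ^ 2) * (r * s) := by ring

lemma norm_le_of_oscillatorEnergy_le (hb : 0 < b) {q w : E} {ρ : ℝ} (hρ : 0 ≤ ρ)
    (h : oscillatorEnergy b k q w ≤ min 1 (2 * b) * ρ ^ 2) : ‖q‖ ≤ ρ ∧ ‖w‖ ≤ ρ := by
  have hsq : ‖q‖ ^ 2 + ‖w‖ ^ 2 ≤ ρ ^ 2 :=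
    le_of_mul_le_mul_left ((min_mul_sq_norm_le_oscillatorEnergy q w).trans h) (by positivity)
  constructor <;> refine le_of_sq_le_sq ?_ hρ <;> nlinarith [sq_nonneg ‖q‖, sq_nonneg ‖w‖]

lemma deriv_oscillatorEnergy_neg (hb : 0 < b) (hk : 0 < k) {q w f g : E} {m η ρ : ℝ}
    (hη : (2 * b + 1 + (1 + k) ^ 2) * η < k * (m / (3 + 2 * k ^ 2 / b))) (hρ : 0 < ρ)
    (hV : m * ρ ^ 2 ≤ oscillatorEnergy b k q w) (hq : ‖q‖ ≤ ρ) (hw : ‖w‖ ≤ ρ)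
    (hf : ‖f‖ ≤ η * ρ) (hg : ‖g‖ ≤ η * ρ) :
    -(2 * k * (b * ‖q‖ ^ 2 + ‖w‖ ^ 2)) +
      (4 * b * ⟪q, f⟫ + 2 * ⟪w, g⟫ + 2 * ⟪w + k • q, g + k • f⟫) < 0 := by
  have hdiss : m / (3 + 2 * k ^ 2 / b) * ρ ^ 2 ≤ b * ‖q‖ ^ 2 + ‖w‖ ^ 2 := by
    rw [div_mul_eq_mul_div, div_le_iff₀' (by positivity)]
    exact hV.trans (oscillatorEnergy_le_mul_dissipation hb q w)
  calc -(2 * k * (b * ‖q‖ ^ 2 + ‖w‖ ^ 2)) +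
        (4 * b * ⟪q, f⟫ + 2 * ⟪w, g⟫ + 2 * ⟪w + k • q, g + k • f⟫)
      ≤ -(2 * k * (m / (3 + 2 * k ^ 2 / b) * ρ ^ 2)) +
          2 * (2 * b + 1 + (1 + k) ^ 2) * (ρ * (η * ρ)) := by
        gcongr
        exact oscillator_perturbation_power_le hb.le hk.le hq hw hf hg
    _ = 2 * ρ ^ 2 * ((2 * b + 1 + (1 + k) ^ 2) * η - k * (m / (3 + 2 * k ^ 2 / b))) := by ring
    _ < 0 := mul_neg_of_pos_of_neg (by positivity) (sub_neg.2 hη)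

theorem dampedOscillator_totally_stable (hb : 0 < b) (hk : 0 < k) :
    ∃ η > (0 : ℝ), ∀ ρ > (0 : ℝ), ∀ (T : ℝ) (q w q' w' : ℝ → E),
      (∀ t ∈ Icc 0 T, HasDerivAt q (q' t) t) → (∀ t ∈ Icc 0 T, HasDerivAt w (w' t) t) →
      (∀ t ∈ Icc 0 T, ‖q t‖ ≤ ρ → ‖w t‖ ≤ ρ →
        ‖q' t - w t‖ ≤ η * ρ ∧ ‖w' t - (-(b • q t) - k • w t)‖ ≤ η * ρ) →
      ‖q 0‖ ≤ η * ρ → ‖w 0‖ ≤ η * ρ →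
      ∀ t ∈ Icc 0 T, ‖q t‖ ≤ ρ ∧ ‖w t‖ ≤ ρ := by
  set m := min 1 (2 * b)
  set S := 2 * b + 1 + (1 + k) ^ 2
  set c := k * (m / (3 + 2 * k ^ 2 / b))
  have hS : 0 < S := by positivity
  have : 0 < c := by positivity
  obtain ⟨η, hη, hη_one, hη_init, hη_diss⟩ : ∃ η > (0 : ℝ), η ≤ 1 ∧ S * η ≤ m ∧ S * η < c := by
    refine ⟨min 1 (min (m / S) (c / (2 * S))), by positivity, min_le_left _ _, ?_, ?_⟩
    · rw [← le_div_iff₀' hS]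
      exact (min_le_right _ _).trans (min_le_left _ _)
    · rw [← lt_div_iff₀' hS]
      refine ((min_le_right _ _).trans (min_le_right _ _)).trans_lt ?_
      gcongr
      linarith
  refine ⟨η, hη, fun ρ hρ T q w q' w' hq hw herr hq0 hw0 t ht =>
    norm_le_of_oscillatorEnergy_le (k := k) hb hρ.le ?_⟩
  have hV (t : ℝ) (ht : t ∈ Icc 0 T) :=
    hasDerivAt_oscillatorEnergy (b := b) (k := k) (q := q) (w := w)
      ((hq t ht).congr_deriv (add_sub_cancel (w t) _).symm)
      ((hw t ht).congr_deriv (add_sub_cancel (-(b • q t) - k • w t) _).symm)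
  refine image_le_of_deriv_right_lt_deriv_boundary (B := fun _ => m * ρ ^ 2) (B' := 0)
    (fun t ht => (hV t ht).continuousAt.continuousWithinAt)
    (fun t ht => (hV t (Ico_subset_Icc_self ht)).hasDerivWithinAt) ?_
    (fun t => hasDerivAt_const t _) (fun t ht hVt => ?_) ht
  · calc oscillatorEnergy b k (q 0) (w 0) ≤ S * (η * ρ) ^ 2 :=
          oscillatorEnergy_le_mul_sq hb.le hk.le hq0 hw0
      _ = (S * η) * η * ρ ^ 2 := by ring
      _ ≤ m * 1 * ρ ^ 2 := by gcongr
      _ = m * ρ ^ 2 := by ring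
  · obtain ⟨hqt, hwt⟩ := norm_le_of_oscillatorEnergy_le hb hρ.le hVt.le
    obtain ⟨hft, hgt⟩ := herr t (Ico_subset_Icc_self ht) hqt hwt
    exact deriv_oscillatorEnergy_neg hb hk hη_diss hρ hVt.ge hqt hwt hft hgt

end DampedOscillator

/-- The central force field `z / ‖z‖ ^ (2 α)`, extended by zero to the origin. -/
noncomputable def centralField {E : Type*} [NormedAddCommGroup E] [NormedSpace ℝ E]
    (α : ℝ) (z : E) : E :=
  ((‖z‖ ^ 2) ^ α)⁻¹ • z

section CentralField

variable {E : Type*} [NormedAddCommGroup E] [InnerProductSpace ℝ E] {α : ℝ} {z : E}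

lemma centralField_eq_rpow_smul (α : ℝ) (z : E) : centralField α z = (‖z‖ ^ 2) ^ (-α) • z := by
  rw [centralField, rpow_neg (sq_nonneg _)]

lemma contDiffAt_centralField (hz : z ≠ 0) {n : WithTop ℕ∞} :
    ContDiffAt ℝ n (centralField α) z := by
  rw [funext (centralField_eq_rpow_smul α)]
  exact ((contDiff_norm_sq ℝ).contDiffAt.rpow_const_of_ne (by simpa)).smul contDiffAt_id

lemma hasFDerivAt_centralField (hz : z ≠ 0) :
    HasFDerivAt (centralField α)
      ((‖z‖ ^ 2) ^ (-α) • (ContinuousLinearMap.id ℝ E -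
        (2 * α / ‖z‖ ^ 2) • (innerSL ℝ z).smulRight z)) z := by
  rw [funext (centralField_eq_rpow_smul α)]
  have hz' : ‖z‖ ^ 2 ≠ 0 := by simpa
  have hpow := (hasStrictFDerivAt_norm_sq z).hasFDerivAt.rpow_const (p := -α) (.inl hz')
  refine (hpow.smul (hasFDerivAt_id z)).congr_fderiv ?_
  ext h
  simp only [rpow_sub_one hz', neg_mul, id_eq, add_apply, smul_apply, sub_apply,
    ContinuousLinearMap.id_apply, ContinuousLinearMap.smulRight_apply, coe_innerSL_apply,
    nsmul_eq_mul, Nat.cast_ofNat, smul_eq_mul, neg_smul, smul_sub, smul_smul]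
  module

lemma centralField_mul_of_norm_one {e : ℂ} (he : ‖e‖ = 1) (α : ℝ) (z : ℂ) :
    centralField α (e * z) = e * centralField α z := by
  rw [centralField, centralField, norm_mul, he, one_mul, mul_smul_comm]

lemma exists_norm_centralField_sub_one_le (α : ℝ) {κ : ℝ} (hκ : 0 < κ) :
    ∃ ρ > 0, ∀ u : ℂ, ‖u‖ ≤ ρ →
      ‖centralField α (u - 1) - (-1 + (1 - α) * u - α * conj u)‖ ≤ κ * ‖u‖ := by
  have hderiv := hasFDerivAt_centralField (α := α) (neg_ne_zero.2 (one_ne_zero (α := ℂ)))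
  obtain ⟨ρ, hρ, hball⟩ :=
    Metric.nhds_basis_closedBall.eventually_iff.1 (hderiv.isLittleO.def hκ)
  refine ⟨ρ, hρ, fun u hu => ?_⟩
  have hexp := hball (x := u - 1) (by simpa using hu)
  have hre : u + conj u = 2 * u.re := by rw [Complex.add_conj]; push_cast; ring
  refine (congrArg norm ?_).trans_le (hexp.trans_eq (by simp))
  simp only [centralField, Complex.real_smul, Complex.ofReal_inv, norm_neg, norm_one, one_pow,
    one_rpow, inv_one, smul_neg, one_smul, sub_neg_eq_add, div_one, map_neg, sub_add_cancel,
    sub_apply, smul_apply, neg_apply, ContinuousLinearMap.id_apply,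
    ContinuousLinearMap.smulRight_apply, coe_innerSL_apply, Complex.inner, map_one, mul_one,
    neg_smul, neg_neg, Complex.ofReal_mul, Complex.ofReal_ofNat]
  linear_combination α * hre

lemma exists_norm_centralField_sub_le (α : ℝ) {κ ρ₀ : ℝ} (hκ : 0 < κ) (hρ₀ : 0 < ρ₀) :
    ∃ ρ ∈ Ioc 0 ρ₀, ∀ e q : ℂ, ‖e‖ = 1 → ‖q‖ ≤ ρ →
      ‖centralField α (q - e) - (-e + (1 - α) * q - α * e ^ 2 * conj q)‖ ≤ κ * ρ := by
  obtain ⟨ρ₁, hρ₁, hu⟩ := exists_norm_centralField_sub_one_le α hκ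
  refine ⟨min ρ₁ ρ₀, ⟨lt_min hρ₁ hρ₀, min_le_right _ _⟩, fun e q he hq => ?_⟩
  have hee : e * conj e = 1 := by rw [Complex.mul_conj, Complex.normSq_eq_norm_sq, he]; norm_num
  obtain ⟨u, rfl⟩ : ∃ u, q = e * u := ⟨conj e * q, by rw [← mul_assoc, hee, one_mul]⟩
  rw [norm_mul, he, one_mul] at hq
  calc ‖centralField α (e * u - e) - (-e + (1 - α) * (e * u) - α * e ^ 2 * conj (e * u))‖
      = ‖e * (centralField α (u - 1) - (-1 + (1 - α) * u - α * conj u))‖ := by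
        rw [← mul_sub_one, centralField_mul_of_norm_one he, map_mul]
        congr 1
        linear_combination α * e * conj u * hee
    _ ≤ κ * ‖u‖ := by
        rw [norm_mul, he, one_mul]
        exact hu u (hq.trans (min_le_left _ _))
    _ ≤ κ * min ρ₁ ρ₀ := by gcongr

end CentralField

section Averaging

variable {A k α ω : ℝ}

/-- The unit vector `(cos ωt, sin ωt)` as a complex number. -/
noncomputable def rotor (ω t : ℝ) : ℂ :=
  Complex.exp (ω * t * Complex.I)

lemma norm_rotor (ω t : ℝ) : ‖rotor ω t‖ = 1 := by
  rw [rotor, ← Complex.ofReal_mul, Complex.norm_exp_ofReal_mul_I]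

lemma continuous_rotor (ω : ℝ) : Continuous (rotor ω) := by
  unfold rotor
  fun_prop

lemma hasDerivAt_rotor (ω t : ℝ) : HasDerivAt (rotor ω) (ω * Complex.I * rotor ω t) t := by
  have h := (((hasDerivAt_id t).ofReal_comp.const_mul (ω : ℂ)).mul_const Complex.I).cexp
  exact h.congr_deriv (by simp [rotor]; ring)

/-- The oscillating part of the velocity at angle `e` of the rotor and displacement `q`: its time
derivative cancels, up to `O(1 / ω)`, the oscillating terms `-A e - A α e² q̄` of the force. -/
noncomputable def velocityCorrection (A α ω : ℝ) (e q : ℂ) : ℂ :=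
  A / (ω * Complex.I) * e + A * α / (2 * ω * Complex.I) * (e ^ 2 * conj q)

lemma norm_velocityCorrection_le (hω : 0 < ω) {e q : ℂ} (he : ‖e‖ = 1) (hq : ‖q‖ ≤ 1) :
    ‖velocityCorrection A α ω e q‖ ≤ |A| * (1 + |α|) / ω := by
  calc ‖velocityCorrection A α ω e q‖
      ≤ |A| / ω + |A| * |α| / (2 * ω) * ‖q‖ := by
        refine (norm_add_le _ _).trans_eq ?_
        simp [he, abs_of_pos hω]
    _ ≤ |A| / ω + |A| * |α| / (2 * ω) * 2 := by gcongr; linarith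
    _ = |A| * (1 + |α|) / ω := by field_simp

lemma hasDerivAt_velocityCorrection (hω : ω ≠ 0) {q : ℝ → ℂ} {q' : ℂ} {t : ℝ}
    (hq : HasDerivAt q q' t) :
    HasDerivAt (fun s => velocityCorrection A α ω (rotor ω s) (q s))
      (A * rotor ω t + A * α * (rotor ω t ^ 2 * conj (q t)) +
        A * α / (2 * ω * Complex.I) * (rotor ω t ^ 2 * conj q')) t := by
  have he := hasDerivAt_rotor ω t
  have h := (he.const_mul (A / (ω * Complex.I))).add
    (((he.pow 2).mul hq.star).const_mul (A * α / (2 * ω * Complex.I)))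
  refine h.congr_deriv ?_
  have : (ω : ℂ) ≠ 0 := by exact_mod_cast hω
  simp only [Nat.cast_ofNat, Nat.add_one_sub_one, pow_one, RCLike.star_def, Pi.pow_apply]
  field_simp
  ring

/-- The acceleration of a particle at displacement `q` from the slow target and with velocity `v`,
when the source of the force is displaced from the target by `e`. -/
noncomputable def drivenAcceleration (A k α : ℝ) (e q v : ℂ) : ℂ :=
  A • centralField α (q - e) - k • v

lemma norm_averaged_acceleration_sub_le (hω : 0 < ω) (hk : 0 ≤ k) {e q v q' v' : ℂ} {κ s : ℝ}
    (he : ‖e‖ = 1) (hq : ‖q‖ ≤ 1) (hq' : ‖q'‖ ≤ 2)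
    (hfield : ‖centralField α (q - e) - (-e + (1 - α) * q - α * e ^ 2 * conj q)‖ ≤ κ)
    (hv' : ‖v' - drivenAcceleration A k α e q v‖ ≤ s) :
    ‖v' + (A * e + A * α * (e ^ 2 * conj q) + A * α / (2 * ω * Complex.I) * (e ^ 2 * conj q')) -
        (-((A * (α - 1)) • q) - k • (v + velocityCorrection A α ω e q))‖ ≤
      s + |A| * κ + (k + 1) * (|A| * (1 + |α|) / ω) := by
  set p := velocityCorrection A α ω e q
  set R := centralField α (q - e) - (-e + (1 - α) * q - α * e ^ 2 * conj q)
  set X := A * α / (2 * ω * Complex.I) * (e ^ 2 * conj q')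
  have hX : ‖X‖ ≤ |A| * (1 + |α|) / ω := by
    calc ‖X‖ = |A| * |α| / (2 * ω) * ‖q'‖ := by simp [X, he, abs_of_pos hω]
      _ ≤ |A| * (1 + |α|) / (2 * ω) * 2 := by gcongr; linarith
      _ = |A| * (1 + |α|) / ω := by field_simp
  have hsplit :
      v' + (A * e + A * α * (e ^ 2 * conj q) + X) - (-((A * (α - 1)) • q) - k • (v + p)) =
        (v' - drivenAcceleration A k α e q v) + A • R + (k • p + X) := by
    simp only [R, drivenAcceleration, Complex.real_smul]
    push_cast
    ring
  rw [hsplit]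
  calc ‖(v' - drivenAcceleration A k α e q v) + A • R + (k • p + X)‖
      ≤ ‖v' - drivenAcceleration A k α e q v‖ + ‖A • R‖ + (‖k • p‖ + ‖X‖) :=
        norm_add₃_le.trans (by gcongr; exact norm_add_le _ _)
    _ = ‖v' - drivenAcceleration A k α e q v‖ + |A| * ‖R‖ + (k * ‖p‖ + ‖X‖) := by
        simp only [norm_smul, norm_eq_abs, abs_of_nonneg hk]
    _ ≤ s + |A| * κ + (k * (|A| * (1 + |α|) / ω) + |A| * (1 + |α|) / ω) := by
        gcongr
        exact norm_velocityCorrection_le hω he hq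
    _ = s + |A| * κ + (k + 1) * (|A| * (1 + |α|) / ω) := by ring

theorem rotatingForce_totally_stable (hAα : 0 < A * (α - 1)) (hk : 0 < k) {ρ₀ : ℝ}
    (hρ₀ : 0 < ρ₀) :
    ∃ η > (0 : ℝ), ∃ ω₁ > (0 : ℝ), ∀ ω > ω₁, ∀ (T : ℝ) (q v q' v' : ℝ → ℂ),
      (∀ t ∈ Icc 0 T, HasDerivAt q (q' t) t) → (∀ t ∈ Icc 0 T, HasDerivAt v (v' t) t) →
      (∀ t ∈ Icc 0 T, ‖q t‖ ≤ ρ₀ → ‖v t‖ ≤ ρ₀ → ‖q' t - v t‖ ≤ η ∧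
        ‖v' t - drivenAcceleration A k α (rotor ω t) (q t) (v t)‖ ≤ η) →
      ‖q 0‖ ≤ η → ‖v 0‖ ≤ η → ∀ t ∈ Icc 0 T, ‖q t‖ ≤ ρ₀ ∧ ‖v t‖ ≤ ρ₀ := by
  obtain ⟨c, hc, hstable⟩ := dampedOscillator_totally_stable (E := ℂ) hAα hk
  have hA : 0 < |A| := abs_pos.2 (left_ne_zero_of_mul hAα.ne')
  obtain ⟨ρ, ⟨hρ, hρ_le⟩, hfield⟩ := exists_norm_centralField_sub_le α
    (κ := c / (3 * |A|)) (ρ₀ := min (ρ₀ / 2) (1 / 2)) (by positivity) (by positivity)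
  obtain ⟨hρρ₀, hρ_half⟩ := le_min_iff.1 hρ_le
  obtain ⟨s, hs, hsρ, hsc⟩ : ∃ s > 0, s ≤ ρ ∧ s ≤ c * ρ / 3 :=
    ⟨min ρ (c * ρ / 3), by positivity, by simp, by simp⟩
  refine ⟨s, hs, (k + 1) * (|A| * (1 + |α|)) / s, by positivity,
    fun ω hω T q v q' v' hq hv herr hq0 hv0 => ?_⟩
  have hω0 : 0 < ω := lt_trans (by positivity) hω
  have hP_mul : (k + 1) * (|A| * (1 + |α|) / ω) ≤ s := by
    rw [← mul_div_assoc]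
    exact (div_le_comm₀ hs hω0).1 hω.le
  have hP : |A| * (1 + |α|) / ω ≤ s :=
    (le_mul_of_one_le_left (by positivity) (by linarith)).trans hP_mul
  set p : ℝ → ℂ := fun t => velocityCorrection A α ω (rotor ω t) (q t)
  have hp {t : ℝ} (ht : ‖q t‖ ≤ ρ) : ‖p t‖ ≤ s :=
    (norm_velocityCorrection_le hω0 (norm_rotor ω t) (by linarith)).trans hP
  have hv_le {t : ℝ} (hqt : ‖q t‖ ≤ ρ) (hwt : ‖v t + p t‖ ≤ ρ) : ‖v t‖ ≤ 2 * ρ := by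
    linarith [norm_le_add_norm_add (v t) (p t), hp hqt]
  have hw (t : ℝ) (ht : t ∈ Icc 0 T) :=
    (hv t ht).add (hasDerivAt_velocityCorrection (A := A) (α := α) hω0.ne' (hq t ht))
  have hbound := hstable ρ hρ T q (v + p) q' _ hq hw (fun t ht hqt hwt => ?_) (by linarith)
    ((norm_add_le _ _).trans (by linarith [hp (hq0.trans hsρ)]))
  · intro t ht
    obtain ⟨hqt, hwt⟩ := hbound t ht
    exact ⟨by linarith, by linarith [hv_le hqt hwt]⟩
  · have hvt := hv_le hqt hwt
    obtain ⟨hq't, hv't⟩ := herr t ht (by linarith) (by linarith)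
    have hq'_le : ‖q' t‖ ≤ 2 := by linarith [norm_le_insert' (q' t) (v t)]
    constructor
    · calc ‖q' t - (v t + p t)‖ ≤ ‖q' t - v t‖ + ‖p t‖ := by rw [← sub_sub]; exact norm_sub_le _ _
        _ ≤ c * ρ := by linarith [hp hqt]
    · refine (norm_averaged_acceleration_sub_le hω0 hk.le (norm_rotor ω t) (by linarith) hq'_le
        (hfield _ _ (norm_rotor ω t) hqt) hv't).trans ?_
      have : |A| * (c / (3 * |A|) * ρ) = c * ρ / 3 := by field_simp
      linarith

end Averaging

section TruncatedField

open Metric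

lemma exists_truncated_centralField (α : ℝ) :
    ∃ (N : ℂ → ℂ → ℂ) (K : ℝ≥0) (M : ℝ), Continuous (Function.uncurry N) ∧
      ∀ e, ‖e‖ = 1 → LipschitzWith K (N e) ∧ (∀ q, ‖N e q‖ ≤ M) ∧
        EqOn (N e) (fun q => centralField α (q - e)) (closedBall 0 (1 / 4)) := by
  obtain ⟨g, K, M, hK, hM, hg⟩ := exists_lipschitzWith_bounded_eqOn_closedBall
    (f := fun u : ℂ => centralField α (u - 1)) (c := 0) (r := 1 / 4) (R := 1 / 2)
    (by norm_num) (by norm_num) fun u hu => by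
      have hu1 : u - 1 ≠ 0 := by
        rintro h
        rw [sub_eq_zero.1 h] at hu
        norm_num at hu
      exact (contDiffAt_centralField hu1).comp u (contDiffAt_id.sub contDiffAt_const)
  refine ⟨fun e q => e * g (conj e * q), K, M, ?_, fun e he => ⟨?_, fun q => ?_, ?_⟩⟩
  · have := hK.continuous
    fun_prop
  · refine LipschitzWith.of_dist_le_mul fun q q' => ?_
    rw [dist_eq_norm, ← mul_sub, norm_mul, he, one_mul, ← dist_eq_norm]
    refine (hK.dist_le_mul _ _).trans_eq ?_
    rw [dist_eq_norm, ← mul_sub, norm_mul, RCLike.norm_conj, he, one_mul, ← dist_eq_norm]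
  · simpa [he] using hM (conj e * q)
  · intro q hq
    have hee : e * conj e = 1 := by rw [Complex.mul_conj, Complex.normSq_eq_norm_sq, he]; norm_num
    have hmem : conj e * q ∈ closedBall 0 (1 / 4) := by simpa [he] using hq
    simp only [hg hmem, ← centralField_mul_of_norm_one he, mul_sub_one, ← mul_assoc, hee, one_mul]

end TruncatedField

section SlowTarget

variable {A k α : ℝ} {γ : ℝ → ℂ}

lemma mul_mem_Icc_zero_one {δ t : ℝ} (hδ : 0 < δ) (ht : t ∈ Icc 0 (1 / δ)) : δ * t ∈ Icc 0 1 :=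
  ⟨mul_nonneg hδ.le ht.1, (le_div_iff₀' hδ).1 ht.2⟩

lemma exists_norm_drivenAcceleration_sub_le (A k α : ℝ) :
    ∃ L > 0, ∀ e q₁ q₂ v : ℂ, ‖e‖ = 1 → ‖q₁‖ ≤ 1 / 4 → ‖q₂‖ ≤ 1 / 4 →
      ‖drivenAcceleration A k α e q₁ v - drivenAcceleration A k α e q₂ v‖ ≤ L * ‖q₁ - q₂‖ := by
  obtain ⟨N, K, _, -, hN⟩ := exists_truncated_centralField α
  refine ⟨|A| * K + 1, by positivity, fun e q₁ q₂ v he hq₁ hq₂ => ?_⟩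
  obtain ⟨hlip, -, heq⟩ := hN e he
  have hN₁ : N e q₁ = centralField α (q₁ - e) := heq (by simpa using hq₁)
  have hN₂ : N e q₂ = centralField α (q₂ - e) := heq (by simpa using hq₂)
  calc ‖drivenAcceleration A k α e q₁ v - drivenAcceleration A k α e q₂ v‖
      = |A| * ‖N e q₁ - N e q₂‖ := by
        rw [drivenAcceleration, drivenAcceleration, sub_sub_sub_cancel_right, ← smul_sub,
          norm_smul, norm_eq_abs, hN₁, hN₂]
    _ ≤ |A| * (K * ‖q₁ - q₂‖) := by gcongr; exact hlip.norm_sub_le q₁ q₂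
    _ ≤ (|A| * K + 1) * ‖q₁ - q₂‖ := by linarith [norm_nonneg (q₁ - q₂)]

theorem rotatingForce_tracks_of_slow_approximation (hAα : 0 < A * (α - 1)) (hk : 0 < k) {ρ : ℝ}
    (hρ : 0 < ρ) (hρ_le : ρ ≤ 1 / 4) :
    ∃ η > (0 : ℝ), ∃ ω₁ > (0 : ℝ), ∀ ω > ω₁, ∀ (T : ℝ) (Γ p p' z v z' v' : ℝ → ℂ),
      (∀ t ∈ Icc 0 T, HasDerivAt p (p' t) t) → (∀ t ∈ Icc 0 T, ‖p' t‖ ≤ η) →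
      (∀ t ∈ Icc 0 T, ‖p t - Γ t‖ ≤ η) →
      (∀ t ∈ Icc 0 T, HasDerivAt z (z' t) t) → (∀ t ∈ Icc 0 T, HasDerivAt v (v' t) t) →
      (∀ t ∈ Icc 0 T, ‖z t - Γ t‖ ≤ ρ → ‖v t‖ ≤ ρ →
        z' t = v t ∧ v' t = drivenAcceleration A k α (rotor ω t) (z t - Γ t) (v t)) →
      ‖z 0 - p 0‖ ≤ η → ‖v 0‖ ≤ η → ∀ t ∈ Icc 0 T, ‖z t - Γ t‖ ≤ ρ ∧ ‖v t‖ ≤ ρ := by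
  obtain ⟨η, hη, ω₁, hω₁, hstable⟩ := rotatingForce_totally_stable hAα hk (half_pos hρ)
  obtain ⟨L, hL, hlip⟩ := exists_norm_drivenAcceleration_sub_le A k α
  obtain ⟨ε, hε, hεη, hερ, hεL⟩ : ∃ ε > 0, ε ≤ η ∧ ε ≤ ρ / 2 ∧ ε ≤ η / L :=
    ⟨min η (min (ρ / 2) (η / L)), by positivity, by simp, by simp, by simp⟩
  refine ⟨ε, hε, ω₁, hω₁, fun ω hω T Γ p p' z v z' v' hp hp' hpΓ hz hv heq hz0 hv0 => ?_⟩
  have hoffset {t : ℝ} (ht : t ∈ Icc 0 T) : ‖(z t - Γ t) - (z t - p t)‖ ≤ ε := by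
    rw [sub_sub_sub_cancel_left]
    exact hpΓ t ht
  have hnear {t : ℝ} (ht : t ∈ Icc 0 T) (hqt : ‖z t - p t‖ ≤ ρ / 2) : ‖z t - Γ t‖ ≤ ρ := by
    linarith [norm_le_insert' (z t - Γ t) (z t - p t), hoffset ht]
  have hbound := hstable ω hω T (fun t => z t - p t) v _ v'
    (fun t ht => (hz t ht).sub (hp t ht)) hv (fun t ht hqt hvt => ?_) (hz0.trans hεη)
    (hv0.trans hεη)
  · intro t ht
    obtain ⟨hqt, hvt⟩ := hbound t ht
    exact ⟨hnear ht hqt, by linarith⟩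
  · obtain ⟨hz't, hv't⟩ := heq t ht (hnear ht hqt) (by linarith)
    constructor
    · rw [hz't, sub_sub_cancel_left, norm_neg]
      exact (hp' t ht).trans hεη
    · rw [hv't]
      calc _ ≤ L * ε := (hlip _ _ _ _ (norm_rotor ω t) ((hnear ht hqt).trans hρ_le)
              (by linarith)).trans (by gcongr; exact hoffset ht)
        _ ≤ L * (η / L) := by gcongr
        _ = η := mul_div_cancel₀ _ hL.ne'

theorem rotatingForce_tracks_slow_target (hAα : 0 < A * (α - 1)) (hk : 0 < k)
    (hγ : ContinuousOn γ (Icc 0 1)) (hγ0 : γ 0 = 0) {ρ : ℝ} (hρ : 0 < ρ) (hρ_le : ρ ≤ 1 / 4) :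
    ∃ r > (0 : ℝ), ∃ ω₁ > (0 : ℝ), ∃ δ₁ > (0 : ℝ), ∀ ω > ω₁, ∀ δ > (0 : ℝ), δ < δ₁ →
      ∀ z v z' v' : ℝ → ℂ,
        (∀ t ∈ Icc 0 (1 / δ), HasDerivAt z (z' t) t) →
        (∀ t ∈ Icc 0 (1 / δ), HasDerivAt v (v' t) t) →
        (∀ t ∈ Icc 0 (1 / δ), ‖z t - γ (δ * t)‖ ≤ ρ → ‖v t‖ ≤ ρ →
          z' t = v t ∧ v' t = drivenAcceleration A k α (rotor ω t) (z t - γ (δ * t)) (v t)) →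
        ‖z 0‖ ≤ r → ‖v 0‖ ≤ r → ∀ t ∈ Icc 0 (1 / δ), ‖z t - γ (δ * t)‖ ≤ ρ ∧ ‖v t‖ ≤ ρ := by
  obtain ⟨η, hη, ω₁, hω₁, htracks⟩ :=
    rotatingForce_tracks_of_slow_approximation hAα hk hρ hρ_le
  obtain ⟨p, p', M, hM, hp, hp', hpγ⟩ :=
    exists_norm_sub_le_of_continuousOn_Icc zero_le_one hγ (half_pos hη)
  refine ⟨η / 2, half_pos hη, ω₁, hω₁, η / M, by positivity,
    fun ω hω δ hδ hδ₁ z v z' v' hz hv heq hz0 hv0 => ?_⟩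
  refine htracks ω hω (1 / δ) _ (fun t => p (δ * t)) (fun t => δ • p' (δ * t)) z v z' v'
    (fun t _ => (hp _).scomp t (hasDerivAt_const_mul δ)) (fun t ht => ?_)
    (fun t ht => (hpγ _ (mul_mem_Icc_zero_one hδ ht)).trans (half_le_self hη.le)) hz hv heq
    ?_ (by linarith)
  · rw [norm_smul, norm_of_nonneg hδ.le]
    calc δ * ‖p' (δ * t)‖ ≤ η / M * M := by
          gcongr
          exact hp' _ (mul_mem_Icc_zero_one hδ ht)
      _ = η := div_mul_cancel₀ _ hM.ne'
  · have hp0 : ‖p 0‖ ≤ η / 2 := by simpa [hγ0] using hpγ 0 (by simp)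
    rw [mul_zero]
    linarith [norm_sub_le (z 0) (p 0)]

lemma exists_truncated_drivenField (A k α ω : ℝ) {Γ : ℝ → ℂ} (hΓ : Continuous Γ) :
    ∃ (F : ℝ → ℂ × ℂ → ℂ × ℂ) (K : ℝ≥0) (M : ℝ),
      (∀ t, LipschitzWith K (F t)) ∧ (∀ X, Continuous (F · X)) ∧ (∀ t X, ‖F t X‖ ≤ M) ∧
      ∀ t z v, ‖z - Γ t‖ ≤ 1 / 4 → ‖v‖ ≤ 1 / 4 →
        F t (z, v) = (v, drivenAcceleration A k α (rotor ω t) (z - Γ t) v) := by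
  obtain ⟨N, K, M, hN_cont, hN⟩ := exists_truncated_centralField α
  obtain ⟨ψ, Kψ, Mψ, hψ_lip, hψ_bdd, hψ⟩ := exists_lipschitzWith_bounded_eqOn_closedBall
    (f := (id : ℂ → ℂ)) (c := 0) (r := 1 / 4) (R := 1 / 2) (by norm_num) (by norm_num)
    fun _ _ => contDiffAt_id
  have hF_lip (t : ℝ) := (hψ_lip.comp LipschitzWith.prod_snd).prodMk
    (((lipschitzWith_smul A).comp ((hN _ (norm_rotor ω t)).1.comp
      (LipschitzWith.prod_fst.sub (LipschitzWith.const (Γ t))))).sub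
      ((lipschitzWith_smul k).comp (hψ_lip.comp LipschitzWith.prod_snd)))
  refine ⟨fun t X => (ψ X.2, A • N (rotor ω t) (X.1 - Γ t) - k • ψ X.2), _,
    max Mψ (|A| * M + |k| * Mψ), hF_lip, fun X => ?_, fun t X => ?_, fun t z v hz hv => ?_⟩
  · have hforce : Continuous fun t => N (rotor ω t) (X.1 - Γ t) :=
      hN_cont.comp ((continuous_rotor ω).prodMk (continuous_const.sub hΓ))
    exact continuous_const.prodMk ((hforce.const_smul A).sub continuous_const)
  · refine max_le_max (hψ_bdd _) ((norm_sub_le _ _).trans ?_)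
    simp only [norm_smul, norm_eq_abs]
    gcongr
    exacts [(hN _ (norm_rotor ω t)).2.1 _, hψ_bdd _]
  · have hψ_eq : ψ v = v := hψ (by simpa using hv)
    have hN_eq : N (rotor ω t) (z - Γ t) = centralField α (z - Γ t - rotor ω t) :=
      (hN _ (norm_rotor ω t)).2.2 (by simpa using hz)
    simp only [hψ_eq, hN_eq, drivenAcceleration]

lemma exists_solution_while_near_target (A k α ω : ℝ) {Γ : ℝ → ℂ} {T : ℝ} (hT : 0 ≤ T)
    (hΓ : ContinuousOn Γ (Icc 0 T)) (z₀ v₀ : ℂ) :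
    ∃ z v z' v' : ℝ → ℂ, z 0 = z₀ ∧ v 0 = v₀ ∧
      (∀ t ∈ Icc 0 T, HasDerivAt z (z' t) t) ∧ (∀ t ∈ Icc 0 T, HasDerivAt v (v' t) t) ∧
      ∀ t ∈ Icc 0 T, ‖z t - Γ t‖ ≤ 1 / 4 → ‖v t‖ ≤ 1 / 4 →
        z' t = v t ∧ v' t = drivenAcceleration A k α (rotor ω t) (z t - Γ t) (v t) := by
  obtain ⟨G, hG, hGΓ⟩ := exists_continuous_eqOn_Icc hT hΓ
  obtain ⟨F, K, M, hF_lip, hF_cont, hF_bdd, hF⟩ := exists_truncated_drivenField A k α ω hG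
  obtain ⟨X, hX0, hX⟩ :=
    exists_hasDerivAt_Icc_of_lipschitzWith_of_bounded hF_lip hF_cont hF_bdd T (z₀, v₀)
  refine ⟨fun t => (X t).1, fun t => (X t).2, fun t => (F t (X t)).1, fun t => (F t (X t)).2,
    congrArg Prod.fst hX0, congrArg Prod.snd hX0, fun t ht => (hX t ht).fst,
    fun t ht => (hX t ht).snd, fun t ht hz hv => ?_⟩
  rw [← hGΓ ht] at hz ⊢
  exact Prod.ext_iff.1 (hF t _ _ hz hv)

/-- `z` is on `[0, T]` a trajectory with velocity `v` of the damped particle driven by a source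
which rotates around the moving target `Γ`. -/
def IsDrivenTrajectory (A k α ω T : ℝ) (Γ z v : ℝ → ℂ) : Prop :=
  ∀ t ∈ Icc 0 T, HasDerivAt z (v t) t ∧
    HasDerivAt v (drivenAcceleration A k α (rotor ω t) (z t - Γ t) (v t)) t

theorem exists_drivenTrajectory_and_tracks (hAα : 0 < A * (α - 1)) (hk : 0 < k)
    (hγ : ContinuousOn γ (Icc 0 1)) (hγ0 : γ 0 = 0) {ρ : ℝ} (hρ : 0 < ρ) :
    ∃ r > (0 : ℝ), ∃ ω₁ > (0 : ℝ), ∃ δ₁ > (0 : ℝ), ∀ ω > ω₁, ∀ δ > (0 : ℝ), δ < δ₁ →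
      (∀ z₀ v₀ : ℂ, ‖z₀‖ ≤ r → ‖v₀‖ ≤ r → ∃ z v : ℝ → ℂ, z 0 = z₀ ∧ v 0 = v₀ ∧
        IsDrivenTrajectory A k α ω (1 / δ) (fun t => γ (δ * t)) z v) ∧
      ∀ z v : ℝ → ℂ, IsDrivenTrajectory A k α ω (1 / δ) (fun t => γ (δ * t)) z v →
        ‖z 0‖ ≤ r → ‖v 0‖ ≤ r → ∀ t ∈ Icc 0 (1 / δ), ‖z t - γ (δ * t)‖ ≤ ρ := by
  obtain ⟨r, hr, ω₁, hω₁, δ₁, hδ₁, hconf⟩ := rotatingForce_tracks_slow_target hAα hk hγ hγ0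
    (ρ := min ρ (1 / 4)) (by positivity) (min_le_right _ _)
  refine ⟨r, hr, ω₁, hω₁, δ₁, hδ₁, fun ω hω δ hδ hδ_lt => ⟨fun z₀ v₀ hz₀ hv₀ => ?_,
    fun z v hzv hz0 hv0 t ht => ?_⟩⟩
  · obtain ⟨z, v, z', v', rfl, rfl, hz, hv, heq⟩ := exists_solution_while_near_target A k α ω
      (one_div_nonneg.2 hδ.le) (hγ.comp (by fun_prop)
        fun _ => mul_mem_Icc_zero_one hδ) z₀ v₀
    have hbound := hconf ω hω δ hδ hδ_lt z v z' v' hz hv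
      (fun t ht hzt hvt => heq t ht (hzt.trans (min_le_right _ _)) (hvt.trans (min_le_right _ _)))
      hz₀ hv₀
    refine ⟨z, v, rfl, rfl, fun t ht => ?_⟩
    obtain ⟨hzt, hvt⟩ := hbound t ht
    obtain ⟨hz't, hv't⟩ := heq t ht (hzt.trans (min_le_right _ _)) (hvt.trans (min_le_right _ _))
    exact ⟨(hz t ht).congr_deriv hz't, (hv t ht).congr_deriv hv't⟩
  · exact (hconf ω hω δ hδ hδ_lt z v _ _ (fun t ht => (hzv t ht).1) (fun t ht => (hzv t ht).2)
      (fun _ _ _ _ => ⟨rfl, rfl⟩) hz0 hv0 t ht).1.trans (min_le_left _ _)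

end SlowTarget

section Planar

variable {A k α : ℝ}

/-- The four-dimensional first-order system in real coordinates: on `[0, T]` the particle at
`(x, y)` with velocity `(vx, vy)` is driven by a source rotating around `(Γ₁, Γ₂)`. -/
def IsPlanarTrajectory (A k α ω T : ℝ) (Γ₁ Γ₂ x vx y vy : ℝ → ℝ) : Prop :=
  ∀ t ∈ Icc (0 : ℝ) T,
    HasDerivAt x (vx t) t ∧
    HasDerivAt vx
      (A * (x t - cos (ω * t) - Γ₁ t) /
        ((x t - cos (ω * t) - Γ₁ t) ^ 2 + (y t - sin (ω * t) - Γ₂ t) ^ 2) ^ α - k * vx t) t ∧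
    HasDerivAt y (vy t) t ∧
    HasDerivAt vy
      (A * (y t - sin (ω * t) - Γ₂ t) /
        ((x t - cos (ω * t) - Γ₁ t) ^ 2 + (y t - sin (ω * t) - Γ₂ t) ^ 2) ^ α - k * vy t) t

lemma hasDerivAt_complex_iff {z : ℝ → ℂ} {z' : ℂ} {t : ℝ} :
    HasDerivAt z z' t ↔
      HasDerivAt (fun s => (z s).re) z'.re t ∧ HasDerivAt (fun s => (z s).im) z'.im t := by
  refine ⟨fun h => ⟨Complex.reCLM.hasFDerivAt.comp_hasDerivAt t h,
    Complex.imCLM.hasFDerivAt.comp_hasDerivAt t h⟩, fun ⟨hre, him⟩ => ?_⟩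
  have h : HasDerivAt (fun s => ((z s).re : ℂ) + (z s).im * Complex.I)
      (z'.re + z'.im * Complex.I) t := hre.ofReal_comp.add (him.ofReal_comp.mul_const Complex.I)
  simpa only [Complex.re_add_im] using h

lemma isDrivenTrajectory_iff {ω T : ℝ} {Γ z v : ℝ → ℂ} :
    IsDrivenTrajectory A k α ω T Γ z v ↔
      IsPlanarTrajectory A k α ω T (fun t => (Γ t).re) (fun t => (Γ t).im)
        (fun t => (z t).re) (fun t => (v t).re) (fun t => (z t).im) (fun t => (v t).im) := by
  refine forall₂_congr fun t _ => ?_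
  set D := ((z t).re - cos (ω * t) - (Γ t).re) ^ 2 + ((z t).im - sin (ω * t) - (Γ t).im) ^ 2
  have hre : (rotor ω t).re = cos (ω * t) := by
    rw [rotor, ← Complex.ofReal_mul, Complex.exp_ofReal_mul_I_re]
  have him : (rotor ω t).im = sin (ω * t) := by
    rw [rotor, ← Complex.ofReal_mul, Complex.exp_ofReal_mul_I_im]
  have hD : ‖z t - Γ t - rotor ω t‖ ^ 2 = D := by
    rw [Complex.sq_norm, Complex.normSq_apply]
    simp only [Complex.sub_re, Complex.sub_im, hre, him, D]
    ring
  have hacc : drivenAcceleration A k α (rotor ω t) (z t - Γ t) (v t) =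
      ⟨A * ((z t).re - cos (ω * t) - (Γ t).re) / D ^ α - k * (v t).re,
        A * ((z t).im - sin (ω * t) - (Γ t).im) / D ^ α - k * (v t).im⟩ := by
    apply Complex.ext <;>
    · simp only [drivenAcceleration, centralField, hD, Complex.sub_re, Complex.sub_im,
        Complex.smul_re, Complex.smul_im, smul_eq_mul, hre, him]
      ring
  rw [hacc, hasDerivAt_complex_iff, hasDerivAt_complex_iff]
  exact and_and_and_comm.trans and_assoc

lemma norm_mk_le_of_sqrt_le {x vx y vy r : ℝ} (h : √(x ^ 2 + vx ^ 2 + y ^ 2 + vy ^ 2) ≤ r) :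
    ‖(⟨x, y⟩ : ℂ)‖ ≤ r ∧ ‖(⟨vx, vy⟩ : ℂ)‖ ≤ r := by
  simp only [Complex.norm_eq_sqrt_sq_add_sq]
  constructor <;> refine (sqrt_le_sqrt ?_).trans h <;>
    linarith [sq_nonneg x, sq_nonneg y, sq_nonneg vx, sq_nonneg vy]

theorem confinement_about_slow_trajectory_general (hAα : 0 < A * (α - 1)) (hk : 0 < k)
    {γ₁ γ₂ : ℝ → ℝ} (hγ₁ : ContinuousOn γ₁ (Icc 0 1)) (hγ₂ : ContinuousOn γ₂ (Icc 0 1))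
    (hγ₁0 : γ₁ 0 = 0) (hγ₂0 : γ₂ 0 = 0) {ε : ℝ} (hε : 0 < ε) :
    ∃ r > (0 : ℝ), ∃ ω₁ > (0 : ℝ), ∃ δ₁ > (0 : ℝ), ∀ ω : ℝ, ω₁ < ω → ∀ δ : ℝ, 0 < δ → δ < δ₁ →
      (∀ x0 vx0 y0 vy0 : ℝ, √(x0 ^ 2 + vx0 ^ 2 + y0 ^ 2 + vy0 ^ 2) ≤ r →
        ∃ x vx y vy : ℝ → ℝ, x 0 = x0 ∧ vx 0 = vx0 ∧ y 0 = y0 ∧ vy 0 = vy0 ∧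
          IsPlanarTrajectory A k α ω (1 / δ) (fun t => γ₁ (δ * t)) (fun t => γ₂ (δ * t))
            x vx y vy) ∧
      ∀ x vx y vy : ℝ → ℝ,
        IsPlanarTrajectory A k α ω (1 / δ) (fun t => γ₁ (δ * t)) (fun t => γ₂ (δ * t)) x vx y vy →
        √(x 0 ^ 2 + vx 0 ^ 2 + y 0 ^ 2 + vy 0 ^ 2) ≤ r →
        ∀ t ∈ Icc (0 : ℝ) (1 / δ), √((x t - γ₁ (δ * t)) ^ 2 + (y t - γ₂ (δ * t)) ^ 2) < ε := by
  obtain ⟨r, hr, ω₁, hω₁, δ₁, hδ₁, h⟩ := exists_drivenTrajectory_and_tracks hAα hk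
    (γ := fun s => ⟨γ₁ s, γ₂ s⟩) (Complex.equivRealProdCLM.symm.continuous.comp_continuousOn
      (hγ₁.prodMk hγ₂)) (by rw [hγ₁0, hγ₂0]; rfl) (half_pos hε)
  refine ⟨r, hr, ω₁, hω₁, δ₁, hδ₁, fun ω hω δ hδ hδ_lt => ?_⟩
  obtain ⟨hexists, htracks⟩ := h ω hω δ hδ hδ_lt
  refine ⟨fun x0 vx0 y0 vy0 h0 => ?_, fun x vx y vy hX h0 t ht => ?_⟩
  · obtain ⟨hz₀, hv₀⟩ := norm_mk_le_of_sqrt_le h0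
    obtain ⟨z, v, hz0, hv0, hzv⟩ := hexists _ _ hz₀ hv₀
    exact ⟨_, _, _, _, congrArg Complex.re hz0, congrArg Complex.re hv0,
      congrArg Complex.im hz0, congrArg Complex.im hv0, isDrivenTrajectory_iff.1 hzv⟩
  · obtain ⟨hz0, hv0⟩ := norm_mk_le_of_sqrt_le h0
    have hdist := htracks (fun t => ⟨x t, y t⟩) (fun t => ⟨vx t, vy t⟩)
      (isDrivenTrajectory_iff.2 hX) hz0 hv0 t ht
    rw [Complex.norm_eq_sqrt_sq_add_sq] at hdist
    exact hdist.trans_lt (half_lt_self hε)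

end Planar

/-- For `A > 0`, `k > 0`, `α > 1` and a `C¹` trajectory `γ` with `γ(0) = 0`,
there are positive constants `r₁, ω₁, δ₁` such that for all `ω > ω₁` and `δ ∈ (0, δ₁)`,
every solution of `Ẋ = F(t, X, ω, γ^δ)` with `‖X(0)‖ ≤ r₁` is defined on `[0, 1/δ]`
and its position stays within distance `1` of `(γ₁(δt), γ₂(δt))` there. -/
theorem confinement_about_slow_trajectory
    (A k α : ℝ) (hA : 0 < A) (hk : 0 < k) (hα : 1 < α)
    (γ₁ γ₂ : ℝ → ℝ)
    (hγ₁ : ContDiffOn ℝ 1 γ₁ (Icc 0 1)) (hγ₂ : ContDiffOn ℝ 1 γ₂ (Icc 0 1))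
    (hγ₁0 : γ₁ 0 = 0) (hγ₂0 : γ₂ 0 = 0) :
    ∃ r₁ > (0 : ℝ), ∃ ω₁ > (0 : ℝ), ∃ δ₁ > (0 : ℝ),
      ∀ ω : ℝ, ω₁ < ω → ∀ δ : ℝ, 0 < δ → δ < δ₁ →
        -- solutions exist (are defined) on all of [0, 1/δ]
        ((∀ x0 vx0 y0 vy0 : ℝ,
            Real.sqrt (x0 ^ 2 + vx0 ^ 2 + y0 ^ 2 + vy0 ^ 2) ≤ r₁ →
            ∃ x vx y vy : ℝ → ℝ,
              x 0 = x0 ∧ vx 0 = vx0 ∧ y 0 = y0 ∧ vy 0 = vy0 ∧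
              ∀ t ∈ Icc (0 : ℝ) (1 / δ),
                HasDerivAt x (vx t) t ∧
                HasDerivAt vx
                  (A * (x t - Real.cos (ω * t) - γ₁ (δ * t)) /
                    ((x t - Real.cos (ω * t) - γ₁ (δ * t)) ^ 2 +
                      (y t - Real.sin (ω * t) - γ₂ (δ * t)) ^ 2) ^ α - k * vx t) t ∧
                HasDerivAt y (vy t) t ∧
                HasDerivAt vy
                  (A * (y t - Real.sin (ω * t) - γ₂ (δ * t)) /
                    ((x t - Real.cos (ω * t) - γ₁ (δ * t)) ^ 2 +
                      (y t - Real.sin (ω * t) - γ₂ (δ * t)) ^ 2) ^ α - k * vy t) t) ∧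
        -- every solution on [0, 1/δ] tracks the trajectory within distance 1
        (∀ x vx y vy : ℝ → ℝ,
            (∀ t ∈ Icc (0 : ℝ) (1 / δ),
              HasDerivAt x (vx t) t ∧
              HasDerivAt vx
                (A * (x t - Real.cos (ω * t) - γ₁ (δ * t)) /
                  ((x t - Real.cos (ω * t) - γ₁ (δ * t)) ^ 2 +
                    (y t - Real.sin (ω * t) - γ₂ (δ * t)) ^ 2) ^ α - k * vx t) t ∧
              HasDerivAt y (vy t) t ∧
              HasDerivAt vy
                (A * (y t - Real.sin (ω * t) - γ₂ (δ * t)) /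
                  ((x t - Real.cos (ω * t) - γ₁ (δ * t)) ^ 2 +
                    (y t - Real.sin (ω * t) - γ₂ (δ * t)) ^ 2) ^ α - k * vy t) t) →
            Real.sqrt ((x 0) ^ 2 + (vx 0) ^ 2 + (y 0) ^ 2 + (vy 0) ^ 2) ≤ r₁ →
            ∀ t ∈ Icc (0 : ℝ) (1 / δ),
              Real.sqrt ((x t - γ₁ (δ * t)) ^ 2 + (y t - γ₂ (δ * t)) ^ 2) < 1)) :=
  confinement_about_slow_trajectory_general (mul_pos hA (sub_pos.2 hα)) hk hγ₁.continuousOn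
    hγ₂.continuousOn hγ₁0 hγ₂0 one_pos
end
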